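/- arXiv:1805.08821 — 2 statements merged into one kernel-verified Lean document; each statement's English description precedes it below -/
import Mathlib

section
/- Let (Ω_n, w_n) and (Ω, w) be simply connected hyperbolic domains in the plane with marked points, with Riemann maps f_n : Ω_n → D and f : Ω → D normalized by f_n(w_n) = 0, f_n'(w_n) > 0, f(w) = 0, f'(w) > 0. Then (Ω_n, w_n) → (Ω, w) in the Carathéodory sense if and only if for every compact set K ⊂ Ω, K ⊂ Ω_n for all sufficiently large n and f_n converges uniformly to f on K. -/
/-!
# Carathéodory's kernel theorem

Write `φ n` and `ψ` for the inverses of the Riemann maps `f n` and `fl`, both defined on the unit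
disc. Limits are taken along ultrafilters finer than `atTop`, in place of subsequences; Montel's
theorem then says that locally bounded families converge along each of them.

Assume Carathéodory convergence. The disc about `wl` reaching just beyond a point outside `Ωl`
cannot lie in infinitely many `Ω n`, so `φ n` eventually omits a value `a n` at bounded distance
from `wl`. A holomorphic square root of `φ n - a n` never takes opposite values, so it avoids a
disc of fixed size, and the Borel-Carathéodory theorem bounds the `φ n` locally uniformly
(`exists_norm_le`). Let `Φ` be a limit of the `φ n`. Comparing `f n` with `ψ` through the Schwarz
lemma (`eventually_norm_deriv_le`) shows that `Φ'(0) ≥ ψ'(0)`; in particular `Φ` is not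
constant, and a quantitative open mapping argument together with the kernel condition places its
image in `Ωl` (`mapsTo_of_kernel`). Then `fl ∘ Φ` is a self-map of the disc fixing `0` with
derivative at least `1`, hence the identity, and `Φ = ψ`. Since the `φ n` converge to `ψ`, the
inverse maps `f n` converge to `fl` (`tendstoUniformlyOn_of_caratheodoryConv`).

Conversely, assume that `f n` converges to `fl` on compact subsets of `Ωl`. Hurwitz's argument
gives a zero of `f n` near `wl`, which must be `w n`. If a connected open `U` containing `wl` lies
in infinitely many `Ω n`, the `f n` have a limit `g` on `U`, with `‖g‖ < 1` by the maximum principle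
and `ψ ∘ g = id` on `U ∩ Ωl`. By continuity `ψ ∘ g = id` at every point of `U` adherent to `U ∩ Ωl`,
so `U ∩ Ωl` is closed in `U` and therefore equal to `U` (`subset_of_frequently_subset`).
-/


open MeasureTheory Metric Filter Topology

noncomputable section

/-- Mean value property over balls: the notion of harmonicity used here. -/
def HasMVP (h : ℂ → ℝ) (Ω : Set ℂ) : Prop :=
  ∀ z ∈ Ω, ∀ r : ℝ, 0 < r → closedBall z r ⊆ Ω →
    h z = ⨍ x in ball z r, h x

/-- `μ` is the harmonic measure of the domain `Ω` at the point `w`: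
a probability measure on `∂Ω` reproducing values of bounded harmonic functions
continuous up to the boundary. -/
def IsHarmonicMeasure (Ω : Set ℂ) (w : ℂ) (μ : Measure ℂ) : Prop :=
  IsProbabilityMeasure μ ∧ μ (frontier Ω)ᶜ = 0 ∧
  ∀ h : ℂ → ℝ, ContinuousOn h (closure Ω) → (∃ M, ∀ x, |h x| ≤ M) →
    HasMVP h Ω → h w = ∫ x, h x ∂μ

/-- Carathéodory convergence of pointed domains. -/
def CaratheodoryConv (Ω : ℕ → Set ℂ) (w : ℕ → ℂ) (Ωl : Set ℂ) (wl : ℂ) : Prop :=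
  Tendsto w atTop (nhds wl) ∧
  (∀ K : Set ℂ, IsCompact K → K ⊆ Ωl → ∀ᶠ n in atTop, K ⊆ Ω n) ∧
  (∀ U : Set ℂ, IsOpen U → IsConnected U → wl ∈ U →
    (∃ᶠ n in atTop, U ⊆ Ω n) → U ⊆ Ωl)

/-- `(Ω n, w n)` and `(Ωl, wl)` have arbitrarily good common interior approximations. -/
def CommonInteriorApprox (Ω : ℕ → Set ℂ) (w : ℕ → ℂ) (Ωl : Set ℂ) (wl : ℂ) : Prop :=
  Tendsto w atTop (nhds wl) ∧
  ∀ ε : ℝ, 0 < ε → ∃ N : ℕ, ∃ K : Set ℂ, IsClosed K ∧ IsConnected K ∧ wl ∈ K ∧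
    K ⊆ Ωl ∧ (∀ n, N ≤ n → K ⊆ Ω n) ∧
    ∀ x ∈ frontier K, infDist x (frontier Ωl) < ε ∧
      ∀ n, N ≤ n → infDist x (frontier (Ω n)) < ε

/-- Weak convergence of measures: integrals of bounded continuous functions converge. -/
def WeakConv (μ : ℕ → Measure ℂ) (ν : Measure ℂ) : Prop :=
  ∀ f : BoundedContinuousFunction ℂ ℝ, Tendsto (fun n => ∫ x, f x ∂(μ n)) atTop (nhds (∫ x, f x ∂ν))

/-- Uniform regularity of a sequence of domains, expressed via the families
`μ n z` of harmonic measures of `Ω n` at `z`. -/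
def UniformlyRegular (Ω : ℕ → Set ℂ) (μ : ℕ → ℂ → Measure ℂ) : Prop :=
  ∀ δ : ℝ, 0 < δ → ∃ ε : ℝ, 0 < ε ∧ ∀ n, ∀ z ∈ Ω n,
    infDist z (frontier (Ω n)) < ε → ENNReal.ofReal (1 - δ) < μ n z (ball z δ)

/-- A domain is regular iff the support of its harmonic measure (at any interior
point) is the whole boundary. -/
def IsRegularDomain (Ω : Set ℂ) (ν : ℂ → Measure ℂ) : Prop :=
  ∀ w ∈ Ω, ∀ x ∈ frontier Ω, ∀ r : ℝ, 0 < r → 0 < ν w (ball x r)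

/-! ### Normal families and a quantitative form of Hurwitz's theorem -/

/-- Montel's theorem, with the extraction of a subsequence replaced by an ultrafilter: a locally
bounded family of holomorphic functions converges locally uniformly along every ultrafilter. -/
lemma exists_tendstoLocallyUniformlyOn_ultrafilter (𝒰 : Ultrafilter ℕ) (F : ℕ → ℂ → ℂ) (U : Set ℂ)
    (hF : ∀ x ∈ U, ∃ r > 0, ∃ M, ∀ᶠ n in (𝒰 : Filter ℕ),
      DifferentiableOn ℂ (F n) (ball x r) ∧ ∀ z ∈ ball x r, ‖F n z‖ ≤ M) :
    ∃ g, TendstoLocallyUniformlyOn F g 𝒰 U := by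
  have hpt : ∀ x, ∃ y, x ∈ U → Tendsto (fun n => F n x) 𝒰 (𝓝 y) := by
    intro x
    by_cases hx : x ∈ U
    · obtain ⟨r, hr, M, h⟩ := hF x hx
      have h1 : ∀ᶠ n in (𝒰 : Filter ℕ), F n x ∈ closedBall (0 : ℂ) M := by
        filter_upwards [h] with n hn
        simpa using hn.2 x (mem_ball_self hr)
      obtain ⟨y, -, hy⟩ := (isCompact_closedBall (0 : ℂ) M).ultrafilter_le_nhds
        (𝒰.map (fun n => F n x)) (le_principal_iff.2 h1)
      exact ⟨y, fun _ => hy⟩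
    · exact ⟨0, fun h => absurd h hx⟩
  choose g hg using hpt
  refine ⟨g, ?_⟩
  rw [Metric.tendstoLocallyUniformlyOn_iff]
  intro ε hε x hx
  obtain ⟨r, hr, M, h⟩ := hF x hx
  obtain ⟨δ, hδ, hδr, hδε⟩ : ∃ δ > 0, δ ≤ r ∧ 2 * |M| / r * δ ≤ ε / 4 := by
    refine ⟨min r (ε / 4 / (2 * |M| / r + 1)), by positivity, min_le_left _ _, ?_⟩
    have hc : 0 ≤ 2 * |M| / r := by positivity
    calc 2 * |M| / r * min r (ε / 4 / (2 * |M| / r + 1))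
        ≤ (2 * |M| / r + 1) * (ε / 4 / (2 * |M| / r + 1)) := by
          gcongr
          · linarith
          · exact min_le_right _ _
      _ = ε / 4 := by field_simp
  -- The Schwarz lemma makes the family uniformly Lipschitz near `x`.
  have hlip : ∀ᶠ n in (𝒰 : Filter ℕ), ∀ z ∈ ball x δ, dist (F n z) (F n x) ≤ ε / 4 := by
    filter_upwards [h] with n hn z hz
    have hm : Set.MapsTo (F n) (ball x r) (closedBall (F n x) (2 * |M|)) := by
      intro y hy
      rw [mem_closedBall, dist_eq_norm]
      have h1 := hn.2 y hy
      have h2 := hn.2 x (mem_ball_self hr)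
      have h3 := le_abs_self M
      linarith [norm_sub_le (F n y) (F n x)]
    refine (Complex.dist_le_div_mul_dist_of_mapsTo_ball hn.1 hm (ball_subset_ball hδr hz)).trans
      (le_trans ?_ hδε)
    gcongr
    exact (mem_ball.1 hz).le
  refine ⟨ball x δ ∩ U, inter_mem (mem_nhdsWithin_of_mem_nhds (ball_mem_nhds x hδ))
    self_mem_nhdsWithin, ?_⟩
  have hgx : ∀ᶠ n in (𝒰 : Filter ℕ), dist (F n x) (g x) < ε / 4 :=
    (hg x hx).eventually (ball_mem_nhds _ (by positivity))
  filter_upwards [hlip, hgx] with n h1 h2 z hz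
  have hgz : dist (g z) (g x) ≤ ε / 4 := by
    refine le_of_tendsto ((hg z hz.2).dist (hg x hx)) ?_
    filter_upwards [hlip] with m hm using hm z hz.1
  have h3 := h1 z hz.1
  have := dist_triangle4 (g z) (g x) (F n x) (F n z)
  rw [dist_comm (g x) (F n x), dist_comm (F n x) (F n z)] at this
  linarith

/-- Near a point where the limit is not locally constant, holomorphic functions converging
locally uniformly cover a fixed disc about the limit value. -/
lemma exists_ball_subset_image {l : Filter ℕ} {F : ℕ → ℂ → ℂ} {Φ : ℂ → ℂ}
    {V : Set ℂ} (hV : IsOpen V) (hconv : TendstoLocallyUniformlyOn F Φ l V)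
    (hF : ∀ᶠ n in l, DifferentiableOn ℂ (F n) V) (hΦ : DifferentiableOn ℂ Φ V) {z₀ : ℂ}
    (hz₀ : z₀ ∈ V) (hne : ¬ ∀ᶠ z in 𝓝 z₀, Φ z = Φ z₀) {r : ℝ} (hr : 0 < r) :
    ∃ δ > 0, ∀ᶠ n in l, ball (Φ z₀) δ ⊆ F n '' (closedBall z₀ r ∩ V) := by
  have han : AnalyticAt ℂ Φ z₀ := hΦ.analyticAt (hV.mem_nhds hz₀)
  have hev := (han.eventually_eq_or_eventually_ne analyticAt_const).resolve_left hne
  rw [eventually_nhdsWithin_iff] at hev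
  obtain ⟨R, hR, hRs⟩ := Metric.eventually_nhds_iff_ball.1 (hev.and (hV.mem_nhds hz₀))
  set s := min r (R / 2) with hs
  have hs0 : 0 < s := by positivity
  have hsr : s ≤ r := min_le_left _ _
  have hsR : s < R := (min_le_right _ _).trans_lt (by linarith)
  have hcV : closedBall z₀ s ⊆ V := fun z hz => (hRs z (closedBall_subset_ball hsR hz)).2
  obtain ⟨p, hp, hpmin⟩ := (isCompact_sphere z₀ s).exists_isMinOn
    (NormedSpace.sphere_nonempty.2 hs0.le)
    (f := fun z => ‖Φ z - Φ z₀‖)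
    ((hΦ.continuousOn.mono (sphere_subset_closedBall.trans hcV)).sub continuousOn_const).norm
  set m := ‖Φ p - Φ z₀‖ with hm
  have hm0 : 0 < m := by
    rw [hm, norm_pos_iff, sub_ne_zero]
    refine (hRs p (closedBall_subset_ball hsR (sphere_subset_closedBall hp))).1 ?_
    rintro rfl
    simp at hp
    exact hs0.ne hp
  have hunif := (tendstoLocallyUniformlyOn_iff_forall_isCompact hV).1 hconv _ hcV
    (isCompact_closedBall z₀ s)
  rw [Metric.tendstoUniformlyOn_iff] at hunif
  refine ⟨m / 8, by positivity, ?_⟩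
  filter_upwards [hunif (m / 8) (by positivity), hF] with n hn hFn
  have hz₀s : z₀ ∈ closedBall z₀ s := mem_closedBall_self hs0.le
  have hsph : ∀ z ∈ sphere z₀ s, m / 2 ≤ ‖F n z - F n z₀‖ := by
    intro z hz
    have h1 : m ≤ ‖Φ z - Φ z₀‖ := hpmin hz
    have h2 := hn z (sphere_subset_closedBall hz)
    have h3 := hn z₀ hz₀s
    rw [← dist_eq_norm] at h1 ⊢
    have h4 := dist_triangle4 (Φ z) (F n z) (F n z₀) (Φ z₀)
    rw [dist_comm (F n z₀) (Φ z₀)] at h4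
    linarith
  have hfreq : ∃ᶠ z in 𝓝 z₀, F n z ≠ F n z₀ := by
    intro hcon
    simp only [not_not] at hcon
    have h1 : AnalyticOnNhd ℂ (F n) (closedBall z₀ s) := fun z hz =>
      hFn.analyticAt (hV.mem_nhds (hcV hz))
    have h2 := h1.eqOn_of_preconnected_of_eventuallyEq analyticOnNhd_const
      (convex_closedBall z₀ s).isPreconnected hz₀s hcon
    have h3 := hsph p hp
    rw [h2 (sphere_subset_closedBall hp)] at h3
    simp at h3
    linarith
  have hsub := DiffContOnCl.ball_subset_image_closedBall (f := F n)
    ((hFn.mono hcV).diffContOnCl_ball subset_rfl) hs0 hsph hfreq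
  intro y hy
  obtain ⟨z, hz, rfl⟩ := hsub (show y ∈ ball (F n z₀) (m / 2 / 2) by
    rw [mem_ball] at hy ⊢
    have := hn z₀ hz₀s
    linarith [dist_triangle y (Φ z₀) (F n z₀)])
  exact ⟨z, ⟨closedBall_subset_closedBall hsr hz, hcV hz⟩, rfl⟩

/-! ### Conformal parametrizations of the disc -/

/-- Inverse pairs of conformal maps between the pointed domain `(Ω, w)` and the unit disc:
`f` is the normalized map onto the disc and `φ` is its inverse, the Riemann parametrization. -/
structure RiemannPair (Ω : Set ℂ) (w : ℂ) (f φ : ℂ → ℂ) : Prop where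
  isOpen : IsOpen Ω
  mem : w ∈ Ω
  diff : DifferentiableOn ℂ f Ω
  diff_inv : DifferentiableOn ℂ φ (ball 0 1)
  maps : Set.MapsTo f Ω (ball 0 1)
  maps_inv : Set.MapsTo φ (ball 0 1) Ω
  left_inv : ∀ x ∈ Ω, φ (f x) = x
  right_inv : ∀ z ∈ ball (0 : ℂ) 1, f (φ z) = z
  map_base : f w = 0
  deriv_pos : ∃ c : ℝ, 0 < c ∧ deriv f w = c

/-- The inverse of an injective holomorphic function is holomorphic. Critical points of `f`, which
cannot be excluded a priori, are isolated and hence give removable singularities of the inverse. -/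
lemma analyticAt_of_leftInverse {Ω : Set ℂ} (hΩ : IsOpen Ω) {f φ : ℂ → ℂ}
    (hf : DifferentiableOn ℂ f Ω) (hφ : ∀ x ∈ Ω, φ (f x) = x) {x : ℂ} (hx : x ∈ Ω) :
    AnalyticAt ℂ φ (f x) := by
  have hopen : ∀ y ∈ Ω, 𝓝 (f y) ≤ map f (𝓝 y) := by
    intro y hy
    refine (hf.analyticAt
      (hΩ.mem_nhds hy)).eventually_constant_or_nhds_le_map_nhds_aux.resolve_left fun hc => ?_
    have h1 : ∀ᶠ z in 𝓝 y, z = y := by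
      filter_upwards [hc, hΩ.mem_nhds hy] with z hz hzΩ
      rw [← hφ z hzΩ, hz, hφ y hy]
    have h2 : ∀ᶠ z in 𝓝[≠] y, z = y := h1.filter_mono nhdsWithin_le_nhds
    obtain ⟨z, hz1, hz2⟩ := (h2.and self_mem_nhdsWithin).exists
    exact hz2 hz1
  have hcont : ∀ y ∈ Ω, ContinuousAt φ (f y) := by
    intro y hy
    rw [ContinuousAt, hφ y hy]
    refine Tendsto.mono_left ?_ (hopen y hy)
    rw [tendsto_map'_iff]
    refine tendsto_id.congr' ?_
    filter_upwards [hΩ.mem_nhds hy] with z hz using (hφ z hz).symm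
  have hright : ∀ y ∈ Ω, ∀ᶠ v in 𝓝 (f y), f (φ v) = v ∧ φ v ∈ Ω := by
    intro y hy
    refine hopen y hy (mem_map.2 ?_)
    filter_upwards [hΩ.mem_nhds hy] with z hz
    simp [hφ z hz, hz]
  have hdiff : ∀ y ∈ Ω, deriv f y ≠ 0 → DifferentiableAt ℂ φ (f y) := by
    intro y hy hne
    refine (HasDerivAt.of_local_left_inverse (f := f) (f' := deriv f y) (hcont y hy) ?_ hne
      ((hright y hy).mono fun v hv => hv.1)).differentiableAt
    rw [hφ y hy]
    exact (hf.differentiableAt (hΩ.mem_nhds hy)).hasDerivAt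
  refine Complex.analyticAt_of_differentiable_on_punctured_nhds_of_continuousAt ?_ (hcont x hx)
  have hd : AnalyticAt ℂ (deriv f) x := (hf.analyticAt (hΩ.mem_nhds hx)).deriv
  have hcrit : ∀ᶠ y in 𝓝[≠] x, deriv f y ≠ 0 := by
    refine hd.eventually_eq_zero_or_eventually_ne_zero.resolve_left fun h0 => ?_
    obtain ⟨R, hR, hRs⟩ := Metric.eventually_nhds_iff_ball.1 (h0.and (hΩ.mem_nhds hx))
    have hconst : ∀ z ∈ ball x R, f z = f x := fun z hz =>
      isOpen_ball.is_const_of_deriv_eq_zero (convex_ball x R).isPreconnected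
        (hf.mono fun y hy => (hRs y hy).2) (fun y hy => (hRs y hy).1) hz (mem_ball_self hR)
    have h1 : ∀ᶠ z in 𝓝[≠] x, z ∈ ball x R := nhdsWithin_le_nhds (ball_mem_nhds x hR)
    obtain ⟨z, hz1, hz2⟩ := (h1.and self_mem_nhdsWithin).exists
    refine hz2 ?_
    change z = x
    rw [← hφ z (hRs z hz1).2, hconst z hz1, hφ x hx]
  rw [eventually_nhdsWithin_iff] at hcrit ⊢
  have hc : Tendsto φ (𝓝 (f x)) (𝓝 x) := by simpa [ContinuousAt, hφ x hx] using hcont x hx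
  filter_upwards [hright x hx, hc.eventually hcrit] with v hv hv2 hvne
  have := hdiff (φ v) hv.2 (hv2 fun h => hvne (by
    rw [Set.mem_singleton_iff] at h ⊢
    rw [← hv.1, h]))
  rwa [hv.1] at this

lemma exists_riemannPair {Ω : Set ℂ} (hΩ : IsOpen Ω) {w : ℂ} (hw : w ∈ Ω) {f : ℂ → ℂ}
    (hf : DifferentiableOn ℂ f Ω ∧ Set.BijOn f Ω (ball 0 1) ∧
      f w = 0 ∧ 0 < (deriv f w).re ∧ (deriv f w).im = 0) :
    ∃ φ, RiemannPair Ω w f φ := by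
  obtain ⟨hd, hb, h0, hre, him⟩ := hf
  have hl : ∀ x ∈ Ω, Function.invFunOn f Ω (f x) = x :=
    fun x hx => hb.injOn.leftInvOn_invFunOn hx
  have hr : ∀ z ∈ ball (0 : ℂ) 1, f (Function.invFunOn f Ω z) = z :=
    fun z hz => hb.surjOn.rightInvOn_invFunOn hz
  refine ⟨Function.invFunOn f Ω, hΩ, hw, hd, ?_, hb.mapsTo, hb.surjOn.mapsTo_invFunOn, hl, hr, h0,
    _, hre, Complex.ext rfl (by simpa using him)⟩
  intro z hz
  obtain ⟨x, hx, rfl⟩ := hb.surjOn hz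
  exact (analyticAt_of_leftInverse hΩ hd hl hx).differentiableAt.differentiableWithinAt

namespace RiemannPair

variable {Ω : Set ℂ} {w : ℂ} {f φ : ℂ → ℂ}

lemma inv_zero (h : RiemannPair Ω w f φ) : φ 0 = w := by
  rw [← h.map_base, h.left_inv w h.mem]

lemma deriv_mul_deriv_inv (h : RiemannPair Ω w f φ) : deriv f w * deriv φ 0 = 1 := by
  have h0 : (0 : ℂ) ∈ ball (0 : ℂ) 1 := mem_ball_self one_pos
  have h1 : HasDerivAt φ (deriv φ 0) 0 :=
    (h.diff_inv.differentiableAt (isOpen_ball.mem_nhds h0)).hasDerivAt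
  have h2 : HasDerivAt f (deriv f w) (φ 0) := by
    rw [h.inv_zero]
    exact (h.diff.differentiableAt (h.isOpen.mem_nhds h.mem)).hasDerivAt
  refine (h2.comp 0 h1).unique ((hasDerivAt_id (0 : ℂ)).congr_of_eventuallyEq ?_)
  filter_upwards [isOpen_ball.mem_nhds h0] with z hz using h.right_inv z hz

end RiemannPair

/-! ### A locally uniform bound for Riemann parametrizations -/

/-- A zero-free holomorphic function on the disc has a holomorphic logarithm: locally, a continuous
branch differs from a branch of the principal logarithm by a constant. -/
lemma exists_differentiableOn_exp_eq {g : ℂ → ℂ} (hg : DifferentiableOn ℂ g (ball 0 1))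
    (hne : ∀ z ∈ ball (0 : ℂ) 1, g z ≠ 0) :
    ∃ L : ℂ → ℂ, DifferentiableOn ℂ L (ball 0 1) ∧
      ∀ z ∈ ball (0 : ℂ) 1, Complex.exp (L z) = g z := by
  have hsc : IsSimplyConnected (ball (0 : ℂ) 1) := by
    have := (convex_ball (0 : ℂ) 1).contractibleSpace ⟨0, mem_ball_self one_pos⟩
    exact SimplyConnectedSpace.ofContractible _
  obtain ⟨L, hLc, hL⟩ := Complex.exists_continuousOn_eqOn_exp_comp (U := ball (0 : ℂ) 1)
    hsc isOpen_ball hg.continuousOn (by rintro ⟨z, hz, hz0⟩; exact hne z hz hz0)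
  replace hL : ∀ z ∈ ball (0 : ℂ) 1, Complex.exp (L z) = g z := hL
  refine ⟨L, fun z hz => DifferentiableAt.differentiableWithinAt ?_, hL⟩
  have hnhds := isOpen_ball.mem_nhds hz
  have hev : ∀ᶠ u in 𝓝 z, L u = Complex.log (g u / g z) + L z := by
    have hc : Tendsto (fun u => |(L u - L z).im|) (𝓝 z) (𝓝 |(L z - L z).im|) :=
      (Complex.continuous_im.continuousAt.tendsto.comp
        ((hLc.continuousAt hnhds).tendsto.sub_const (L z))).abs
    have hlt : |(L z - L z).im| < Real.pi := by simpa using Real.pi_pos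
    filter_upwards [hc.eventually (gt_mem_nhds hlt), hnhds] with u hu huD
    rw [← hL u huD, ← hL z hz, ← Complex.exp_sub,
      Complex.log_exp (abs_lt.1 hu).1 (abs_lt.1 hu).2.le]
    ring
  refine DifferentiableAt.congr_of_eventuallyEq ?_ hev
  refine DifferentiableAt.add_const _ (DifferentiableAt.clog
    ((hg.differentiableAt hnhds).div_const _) ?_)
  rw [div_self (hne z hz)]
  exact Complex.one_mem_slitPlane

/-- A parametrization omitting the value `a` has a square root `σ` of `φ - a`. Since `φ` is
injective, `σ` never takes opposite values, and since `Ω` contains a disc about `φ 0`, it stays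
a definite distance away from `-σ 0`. -/
lemma RiemannPair.exists_sqrt {Ω : Set ℂ} {w : ℂ} {f φ : ℂ → ℂ} (h : RiemannPair Ω w f φ)
    {ρ S : ℝ} (hρ : 0 < ρ) (hρ1 : ρ ≤ 1) (hball : ball w ρ ⊆ Ω) {a : ℂ} (ha : a ∉ Ω)
    (hS : 1 ≤ S) (haw : ‖w - a‖ ≤ S ^ 2) :
    ∃ σ : ℂ → ℂ, DifferentiableOn ℂ σ (ball 0 1) ∧ (∀ z ∈ ball (0 : ℂ) 1, σ z ^ 2 = φ z - a) ∧
      0 < ‖σ 0‖ ∧ ‖σ 0‖ ≤ S ∧ ∀ z ∈ ball (0 : ℂ) 1, ρ / (2 * S + 1) ≤ ‖σ z + σ 0‖ := by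
  have h0 : (0 : ℂ) ∈ ball (0 : ℂ) 1 := mem_ball_self one_pos
  have hne : ∀ z ∈ ball (0 : ℂ) 1, φ z - a ≠ 0 := by
    intro z hz hcon
    rw [sub_eq_zero] at hcon
    exact ha (hcon ▸ h.maps_inv hz)
  obtain ⟨L, hLd, hL⟩ := exists_differentiableOn_exp_eq (g := fun z => φ z - a)
    (h.diff_inv.sub (differentiableOn_const _)) hne
  set σ : ℂ → ℂ := fun z => Complex.exp (L z / 2) with hσdef
  have hσd : DifferentiableOn ℂ σ (ball 0 1) := (hLd.div_const 2).cexp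
  have hσ : ∀ z ∈ ball (0 : ℂ) 1, σ z ^ 2 = φ z - a := by
    intro z hz
    rw [← hL z hz, hσdef, ← Complex.exp_nat_mul]
    congr 1
    push_cast
    ring
  have hσne : ∀ z ∈ ball (0 : ℂ) 1, σ z ≠ 0 := fun z _ => Complex.exp_ne_zero _
  have hσc := hσd.continuousOn
  have hopp : ∀ z ∈ ball (0 : ℂ) 1, ∀ u ∈ ball (0 : ℂ) 1, σ z ≠ -σ u := by
    intro z hz u hu hcon
    have h1 : φ z = φ u := by
      have h2 := hσ z hz
      rw [hcon, neg_sq, hσ u hu] at h2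
      simpa using h2.symm
    have h3 : z = u := by rw [← h.right_inv z hz, h1, h.right_inv u hu]
    subst h3
    apply hσne z hz
    linear_combination hcon / 2
  have hσ0 : σ 0 ≠ 0 := hσne 0 h0
  have hσ0sq : ‖σ 0‖ ^ 2 = ‖w - a‖ := by rw [← norm_pow, hσ 0 h0, h.inv_zero]
  have hσ0S : ‖σ 0‖ ≤ S := by
    refine le_of_sq_le_sq ?_ (by linarith)
    rw [hσ0sq]
    exact haw
  have hρw : ρ ≤ ‖w - a‖ := by
    by_contra hcon
    push Not at hcon
    exact ha (hball (by rwa [mem_ball, dist_comm, dist_eq_norm]))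
  have hr1 : ρ / (2 * S + 1) ≤ 1 := by
    rw [div_le_one (by linarith)]
    linarith
  refine ⟨σ, hσd, hσ, norm_pos_iff.2 hσ0, hσ0S, fun z hz => ?_⟩
  by_contra! hcon
  -- Otherwise `φ z` lies in the disc `ball w ρ`, over which `σ / σ 0` has positive real part.
  have hclose : ‖φ z - w‖ < ρ := by
    have h1 : φ z - w = (σ z + σ 0) * (σ z + σ 0 - 2 * σ 0) := by
      have h2 := hσ z hz
      have h3 := hσ 0 h0
      rw [h.inv_zero] at h3
      linear_combination h3 - h2
    have h4 : ‖σ z + σ 0 - 2 * σ 0‖ ≤ 1 + 2 * S := by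
      refine (norm_sub_le _ _).trans ?_
      rw [norm_mul, Complex.norm_ofNat]
      linarith
    rw [h1, norm_mul]
    calc ‖σ z + σ 0‖ * ‖σ z + σ 0 - 2 * σ 0‖ ≤ ‖σ z + σ 0‖ * (1 + 2 * S) := by gcongr
      _ < ρ / (2 * S + 1) * (1 + 2 * S) := by gcongr
      _ = ρ := by field_simp; ring
  set T := f '' ball w ρ with hT
  have hTD : T ⊆ ball 0 1 := by
    rintro _ ⟨x, hx, rfl⟩
    exact h.maps (hball hx)
  have hTc : IsPreconnected T :=
    (convex_ball w ρ).isPreconnected.image _ (h.diff.continuousOn.mono hball)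
  have hzT : z ∈ T := ⟨φ z, by rwa [mem_ball, dist_eq_norm], h.right_inv z hz⟩
  have h0T : (0 : ℂ) ∈ T := ⟨w, mem_ball_self hρ, h.map_base⟩
  -- The square `(x - a) / (w - a)` lies in the disc of radius `1` about `1`, so it is not `≤ 0`.
  have hre : ∀ u ∈ T, (σ u / σ 0).re ≠ 0 := by
    rintro _ ⟨x, hx, rfl⟩ hcon0
    have hsq : (σ (f x) / σ 0) ^ 2 = (x - a) / (w - a) := by
      rw [div_pow, hσ _ (hTD ⟨x, hx, rfl⟩), hσ 0 h0, h.left_inv x (hball hx), h.inv_zero]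
    have hwa : w - a ≠ 0 := by
      rw [← norm_pos_iff]
      linarith
    have h1 : ‖(x - a) / (w - a) - 1‖ < 1 := by
      rw [div_sub_one hwa, norm_div, div_lt_one (norm_pos_iff.2 hwa)]
      have : x - a - (w - a) = x - w := by ring
      rw [this, ← dist_eq_norm]
      exact (mem_ball.1 hx).trans_le hρw
    rw [← hsq] at h1
    have h2 := (Complex.abs_re_le_norm _).trans_lt h1
    rw [abs_lt] at h2
    simp only [sq, Complex.sub_re, Complex.mul_re, hcon0, Complex.one_re] at h2
    nlinarith [mul_self_nonneg (σ (f x) / σ 0).im]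
  have hcontre : ContinuousOn (fun u => (σ u / σ 0).re) T :=
    Complex.continuous_re.comp_continuousOn ((hσc.mono hTD).div_const _)
  have hpos : 0 < (σ z / σ 0).re := by
    by_contra! hneg
    have h1 : (σ 0 / σ 0).re = 1 := by rw [div_self hσ0, Complex.one_re]
    obtain ⟨u, hu, hu0⟩ := hTc.intermediate_value hzT h0T hcontre
      (show (0 : ℝ) ∈ Set.Icc _ _ from ⟨hneg, by rw [h1]; norm_num⟩)
    exact hre u hu hu0
  have h1 : 1 ≤ ‖σ z / σ 0 + 1‖ := by
    refine le_trans ?_ (Complex.re_le_norm _)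
    simp only [Complex.add_re, Complex.one_re]
    linarith
  have h2 : ‖σ z + σ 0‖ = ‖σ 0‖ * ‖σ z / σ 0 + 1‖ := by
    rw [← norm_mul]
    congr 1
    field_simp
  have h3 : ‖σ 0‖ ≤ ‖σ z + σ 0‖ := by
    rw [h2]
    exact le_mul_of_one_le_right (norm_nonneg _) h1
  have h4 : ρ / (2 * S + 1) ≤ ρ := div_le_self hρ.le (by linarith)
  have h5 : ‖σ 0‖ < 1 := by linarith
  nlinarith [norm_nonneg (σ 0)]

/-- A zero-free holomorphic function on the disc, bounded below by `m` and with `|g 0| ≤ C`, is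
bounded on smaller discs: apply the Borel-Carathéodory theorem to a branch of `-log (g / g 0)`. -/
lemma norm_le_of_le_norm {g : ℂ → ℂ} {m C : ℝ} (hg : DifferentiableOn ℂ g (ball 0 1))
    (hm : 0 < m) (hmC : m < C) (hgm : ∀ z ∈ ball (0 : ℂ) 1, m ≤ ‖g z‖) (hg0 : ‖g 0‖ ≤ C) {t : ℝ}
    (ht : t < 1) {z : ℂ} (hz : ‖z‖ ≤ t) :
    ‖g z‖ ≤ C * Real.exp (2 * Real.log (C / m) * t / (1 - t)) := by
  have h0 : (0 : ℂ) ∈ ball (0 : ℂ) 1 := mem_ball_self one_pos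
  have hzb : z ∈ ball (0 : ℂ) 1 := by
    rw [mem_ball_zero_iff]; linarith
  have hne : ∀ z ∈ ball (0 : ℂ) 1, g z ≠ 0 := fun z hz =>
    norm_pos_iff.1 (hm.trans_le (hgm z hz))
  obtain ⟨L, hLd, hL⟩ := exists_differentiableOn_exp_eq hg hne
  have hC : 0 < C := hm.trans hmC
  have ht0 : 0 ≤ t := (norm_nonneg z).trans hz
  have hA : 0 < Real.log (C / m) := Real.log_pos ((one_lt_div hm).2 hmC)
  have hnorm : ∀ z ∈ ball (0 : ℂ) 1, ‖g z‖ = Real.exp (L z).re := fun z hz => by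
    rw [← hL z hz, Complex.norm_exp]
  have hBC := Complex.borelCaratheodory_zero (f := fun z => L 0 - L z) (R := 1) hA
    ((differentiableOn_const _).sub hLd) (fun u hu => by
      simp only [Set.mem_ofPred_eq, Complex.sub_re]
      rw [Real.le_log_iff_exp_le (by positivity), Real.exp_sub, ← hnorm 0 h0, ← hnorm u hu]
      have := hgm u hu
      gcongr) one_pos hzb (by simp)
  have h1 : (L z).re - (L 0).re ≤ 2 * Real.log (C / m) * t / (1 - t) := by
    have h2 : (L z).re - (L 0).re ≤ ‖L 0 - L z‖ := by
      rw [norm_sub_rev, ← Complex.sub_re]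
      exact Complex.re_le_norm _
    refine h2.trans (hBC.trans ?_)
    have : 0 < 1 - t := by linarith
    gcongr
  rw [hnorm z hzb, show (L z).re = (L 0).re + ((L z).re - (L 0).re) by ring, Real.exp_add,
    ← hnorm 0 h0]
  gcongr

/-- A compactness statement: the parametrizations of domains which contain a fixed disc about
`w` and omit a point at bounded distance are uniformly bounded on compact subsets of the disc. -/
lemma exists_norm_le {ρ S t : ℝ} (hρ : 0 < ρ) (hρ1 : ρ ≤ 1) (hS : 1 ≤ S) (ht : t < 1) :
    ∃ B : ℝ, ∀ (Ω : Set ℂ) (w : ℂ) (f φ : ℂ → ℂ) (a : ℂ), RiemannPair Ω w f φ →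
      ball w ρ ⊆ Ω → a ∉ Ω → ‖w - a‖ ≤ S ^ 2 → ∀ z, ‖z‖ ≤ t → ‖φ z - a‖ ≤ B := by
  refine ⟨(2 * S * Real.exp (2 * Real.log (2 * S / (ρ / (2 * S + 1))) * t / (1 - t)) + S) ^ 2, ?_⟩
  intro Ω w f φ a h hball ha haw z hz
  obtain ⟨σ, hσd, hσ, hσ0, hσS, hσm⟩ := h.exists_sqrt hρ hρ1 hball ha hS haw
  have hzb : z ∈ ball (0 : ℂ) 1 := by
    rw [mem_ball_zero_iff]; linarith
  have h1 := norm_le_of_le_norm (g := fun z => σ z + σ 0) (m := ρ / (2 * S + 1)) (C := 2 * S)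
    (hσd.add (differentiableOn_const _)) (by positivity)
    ((div_lt_one (by linarith)).2 (by linarith) |>.trans (by linarith))
    hσm (by linarith [norm_add_le (σ 0) (σ 0)]) ht hz
  rw [← hσ z hzb, norm_pow]
  gcongr
  have h2 : ‖σ z‖ ≤ ‖σ z + σ 0‖ + ‖σ 0‖ := by
    simpa using norm_sub_le (σ z + σ 0) (σ 0)
  linarith

/-! ### The Carathéodory kernel theorem -/

section Limits

variable {Ω : ℕ → Set ℂ} {w : ℕ → ℂ} {Ωl : Set ℂ} {wl : ℂ} {f φ : ℕ → ℂ → ℂ} {fl ψ : ℂ → ℂ}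

/-- Upper semicontinuity of the derivatives at the base points. The translates of a compact part
of `Ωl` eventually lie in `Ω n`, so `f n` can be compared with `ψ` through the Schwarz lemma. -/
lemma eventually_norm_deriv_le (hn : ∀ n, RiemannPair (Ω n) (w n) (f n) (φ n))
    (hl : RiemannPair Ωl wl fl ψ) (hconv : CaratheodoryConv Ω w Ωl wl) {ρ : ℝ} (hρ : 0 < ρ)
    (hρ1 : ρ < 1) : ∀ᶠ n in atTop, ρ * ‖deriv (f n) (w n)‖ ≤ ‖deriv fl wl‖ := by
  obtain ⟨hw, hK, -⟩ := hconv
  have hsub : closedBall (0 : ℂ) ρ ⊆ ball 0 1 := closedBall_subset_ball hρ1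
  have hKc : IsCompact (ψ '' closedBall 0 ρ) :=
    (isCompact_closedBall (0 : ℂ) ρ).image_of_continuousOn (hl.diff_inv.continuousOn.mono hsub)
  have hKl : ψ '' closedBall 0 ρ ⊆ Ωl := by
    rintro _ ⟨z, hz, rfl⟩
    exact hl.maps_inv (hsub hz)
  obtain ⟨η, hη, hηs⟩ := hKc.exists_cthickening_subset_open hl.isOpen hKl
  filter_upwards [hK _ hKc.cthickening hηs, hw.eventually (ball_mem_nhds wl hη)] with n h1 h2
  have hmem : ∀ z ∈ ball (0 : ℂ) ρ, ψ z + (w n - wl) ∈ Ω n := by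
    intro z hz
    refine h1 (mem_cthickening_of_dist_le _ (ψ z) η _ ⟨z, ball_subset_closedBall hz, rfl⟩ ?_)
    rw [dist_eq_norm, add_sub_cancel_left, ← dist_eq_norm]
    exact (mem_ball.1 h2).le
  have h0 : (0 : ℂ) ∈ ball (0 : ℂ) ρ := mem_ball_self hρ
  have hbase : ψ 0 + (w n - wl) = w n := by rw [hl.inv_zero]; ring
  have hψd : HasDerivAt ψ (deriv ψ 0) 0 := (hl.diff_inv.differentiableAt
    (isOpen_ball.mem_nhds (mem_ball_self one_pos))).hasDerivAt
  have hder : HasDerivAt (fun z => f n (ψ z + (w n - wl))) (deriv (f n) (w n) * deriv ψ 0) 0 := by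
    have h3 : HasDerivAt (f n) (deriv (f n) (w n)) (ψ 0 + (w n - wl)) := by
      rw [hbase]
      exact ((hn n).diff.differentiableAt ((hn n).isOpen.mem_nhds (hn n).mem)).hasDerivAt
    exact h3.comp 0 (hψd.add_const _)
  have hS := Complex.norm_deriv_le_div_of_mapsTo_ball (c := 0) (R₁ := ρ) (R₂ := 1)
    (f := fun z => f n (ψ z + (w n - wl)))
    ((hn n).diff.comp ((hl.diff_inv.mono (ball_subset_closedBall.trans hsub)).add_const _) hmem)
    (fun z hz => by
      rw [hbase, (hn n).map_base]
      exact ball_subset_closedBall ((hn n).maps (hmem z hz))) hρ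
  rw [hder.deriv, norm_mul, le_div_iff₀ hρ] at hS
  have hinv : ‖deriv fl wl‖ * ‖deriv ψ 0‖ = 1 := by
    rw [← norm_mul, hl.deriv_mul_deriv_inv, norm_one]
  calc ρ * ‖deriv (f n) (w n)‖
      = ‖deriv (f n) (w n)‖ * ρ * (‖deriv fl wl‖ * ‖deriv ψ 0‖) := by rw [hinv]; ring
    _ = ‖deriv (f n) (w n)‖ * ‖deriv ψ 0‖ * ρ * ‖deriv fl wl‖ := by ring
    _ ≤ 1 * ‖deriv fl wl‖ := by gcongr
    _ = ‖deriv fl wl‖ := one_mul _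

/-- The uniform bound for the parametrizations of `Ω n`, with an omitted value `a` depending on `n`:
by the kernel condition, the `Ω n` eventually cannot contain a disc about `wl` meeting `Ωlᶜ`. -/
lemma eventually_norm_inv_le (hn : ∀ n, RiemannPair (Ω n) (w n) (f n) (φ n))
    (hl : RiemannPair Ωl wl fl ψ) (hhypl : Ωlᶜ.Nonempty) (hconv : CaratheodoryConv Ω w Ωl wl)
    {t : ℝ} (ht : t < 1) : ∃ B : ℝ, ∀ᶠ n in atTop, ∀ z, ‖z‖ ≤ t → ‖φ n z‖ ≤ B := by
  obtain ⟨hw, hK, hU⟩ := hconv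
  obtain ⟨b, hb⟩ := hhypl
  obtain ⟨R₀, hR₀, hR₀s⟩ := Metric.isOpen_iff.1 hl.isOpen wl hl.mem
  set ρ := min 1 (R₀ / 4) with hρdef
  have hρ : 0 < ρ := by positivity
  have hρ1 : ρ ≤ 1 := min_le_left _ _
  have hρR : ρ ≤ R₀ / 4 := min_le_right _ _
  set R := ‖b - wl‖ + 1 with hRdef
  have hR : 1 ≤ R := by
    rw [hRdef]
    linarith [norm_nonneg (b - wl)]
  have hbR : b ∈ ball wl R := by
    rw [mem_ball, dist_eq_norm, hRdef]
    linarith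
  -- The kernel condition for this disc, which is not contained in `Ωl`, yields omitted values.
  have homit : ∀ᶠ n in atTop, ¬ ball wl R ⊆ Ω n := by
    rw [← not_frequently]
    intro hfr
    exact hb (hU _ isOpen_ball ((convex_ball wl R).isConnected ⟨wl, mem_ball_self (by linarith)⟩)
      (mem_ball_self (by linarith)) hfr hbR)
  have hin : ∀ᶠ n in atTop, closedBall wl (2 * ρ) ⊆ Ω n :=
    hK _ (isCompact_closedBall _ _) ((closedBall_subset_ball (by linarith)).trans hR₀s)
  obtain ⟨B, hB⟩ := exists_norm_le (S := R + 1) hρ hρ1 (by linarith) ht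
  refine ⟨B + (R + ‖wl‖), ?_⟩
  filter_upwards [homit, hin, hw.eventually (ball_mem_nhds wl hρ)] with n h1 h2 h3 z hz
  obtain ⟨a, haR, haΩ⟩ := Set.not_subset.1 h1
  rw [mem_ball] at haR
  have h3 : dist (w n) wl < ρ := h3
  have h4 : ball (w n) ρ ⊆ Ω n := by
    refine Set.Subset.trans (fun x hx => ?_) h2
    rw [mem_ball] at hx
    rw [mem_closedBall]
    linarith [dist_triangle x (w n) wl]
  have h5 : ‖w n - a‖ ≤ (R + 1) ^ 2 := by
    rw [← dist_eq_norm]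
    have h6 := dist_triangle_right (w n) a wl
    nlinarith
  have h6 := hB _ _ _ _ a (hn n) h4 haΩ h5 z hz
  have h7 : ‖a‖ ≤ R + ‖wl‖ := by
    rw [dist_eq_norm] at haR
    have := norm_sub_norm_le a wl
    linarith
  have h8 : ‖φ n z‖ ≤ ‖φ n z - a‖ + ‖a‖ := by simpa using norm_add_le (φ n z - a) a
  linarith

/-- If holomorphic functions on the disc, with values in `Ω n`, converge locally uniformly to a
nonconstant `Φ` with `Φ 0 = wl`, then the kernel condition forces `Φ` to take values in `Ωl`. -/
lemma mapsTo_of_kernel (𝒰 : Ultrafilter ℕ) (h𝒰 : (𝒰 : Filter ℕ) ≤ atTop)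
    (hconv : CaratheodoryConv Ω w Ωl wl) {Φ : ℂ → ℂ}
    (hφd : ∀ n, DifferentiableOn ℂ (φ n) (ball 0 1))
    (hφm : ∀ n, Set.MapsTo (φ n) (ball 0 1) (Ω n))
    (hlim : TendstoLocallyUniformlyOn φ Φ 𝒰 (ball 0 1)) (hΦd : DifferentiableOn ℂ Φ (ball 0 1))
    (hΦ0 : Φ 0 = wl) (hderiv : deriv Φ 0 ≠ 0) : Set.MapsTo Φ (ball 0 1) Ωl := by
  have h0 : (0 : ℂ) ∈ ball (0 : ℂ) 1 := mem_ball_self one_pos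
  have han : AnalyticOnNhd ℂ Φ (ball 0 1) := hΦd.analyticOnNhd isOpen_ball
  have hnc : ∀ z ∈ ball (0 : ℂ) 1, ¬ ∀ᶠ u in 𝓝 z, Φ u = Φ z := by
    intro z hz hc
    have h1 := han.eqOn_of_preconnected_of_eventuallyEq analyticOnNhd_const
      (convex_ball (0 : ℂ) 1).isPreconnected hz hc
    have h2 : Φ =ᶠ[𝓝 0] fun _ => Φ z := by
      filter_upwards [isOpen_ball.mem_nhds h0] with u hu using h1 hu
    exact hderiv (by rw [h2.deriv_eq, deriv_const])
  intro z hz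
  obtain ⟨t, hzt, ht1⟩ := exists_between (mem_ball_zero_iff.1 hz)
  have hsub : closedBall (0 : ℂ) t ⊆ ball 0 1 := closedBall_subset_ball ht1
  have hsub' : ball (0 : ℂ) t ⊆ ball 0 1 := ball_subset_closedBall.trans hsub
  have ht0 : 0 < t := (norm_nonneg z).trans_lt hzt
  have hcover : ∀ᶠ n in (𝒰 : Filter ℕ), Φ '' closedBall 0 t ⊆ Ω n := by
    refine (isCompact_closedBall (0 : ℂ) t).induction_on
      (p := fun s => ∀ᶠ n in (𝒰 : Filter ℕ), Φ '' s ⊆ Ω n) (by simp) ?_ ?_ ?_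
    · intro s s' hss h
      filter_upwards [h] with n hn using (Set.image_mono hss).trans hn
    · intro s s' h h'
      filter_upwards [h, h'] with n h1 h2
      rw [Set.image_union]
      exact Set.union_subset h1 h2
    · intro z₀ hz₀
      obtain ⟨δ, hδ, hδs⟩ := exists_ball_subset_image isOpen_ball hlim (.of_forall hφd) hΦd
        (hsub hz₀) (hnc z₀ (hsub hz₀)) one_pos
      refine ⟨Φ ⁻¹' ball (Φ z₀) δ, mem_nhdsWithin_of_mem_nhds
        ((hΦd.continuousOn.continuousAt (isOpen_ball.mem_nhds (hsub hz₀))).preimage_mem_nhds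
          (ball_mem_nhds _ hδ)), ?_⟩
      filter_upwards [hδs] with n hn
      rintro _ ⟨u, hu, rfl⟩
      obtain ⟨v, hv, hvu⟩ := hn hu
      rw [← hvu]
      exact hφm n hv.2
  have hfr : ∃ᶠ n in atTop, Φ '' ball 0 t ⊆ Ω n :=
    Frequently.filter_mono (hcover.mono fun n hn =>
      (Set.image_mono ball_subset_closedBall).trans hn).frequently h𝒰
  have hop : IsOpen (Φ '' ball 0 t) := by
    refine (han.is_constant_or_isOpen (convex_ball (0 : ℂ) 1).isPreconnected).resolve_left
      ?_ _ hsub' isOpen_ball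
    rintro ⟨c, hc⟩
    refine hnc 0 h0 ?_
    filter_upwards [isOpen_ball.mem_nhds h0] with u hu
    rw [hc u hu, hc 0 h0]
  have hcn : IsConnected (Φ '' ball 0 t) :=
    ((convex_ball (0 : ℂ) t).isConnected ⟨0, mem_ball_self ht0⟩).image _
      (hΦd.continuousOn.mono hsub')
  exact hconv.2.2 _ hop hcn ⟨0, mem_ball_self ht0, hΦ0⟩ hfr ⟨z, mem_ball_zero_iff.2 hzt, rfl⟩

/-- Carathéodory convergence forces the Riemann parametrizations to converge: every ultrafilter
limit `Φ` takes values in `Ωl`, and `fl ∘ Φ` is the identity by the rigid case of the Schwarz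
lemma. -/
lemma tendsto_inv_of_caratheodoryConv (𝒰 : Ultrafilter ℕ) (h𝒰 : (𝒰 : Filter ℕ) ≤ atTop)
    (hn : ∀ n, RiemannPair (Ω n) (w n) (f n) (φ n)) (hl : RiemannPair Ωl wl fl ψ)
    (hhypl : Ωlᶜ.Nonempty) (hconv : CaratheodoryConv Ω w Ωl wl) :
    TendstoLocallyUniformlyOn φ ψ 𝒰 (ball 0 1) := by
  have h0 : (0 : ℂ) ∈ ball (0 : ℂ) 1 := mem_ball_self one_pos
  have hφd : ∀ n, DifferentiableOn ℂ (φ n) (ball 0 1) := fun n => (hn n).diff_inv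
  obtain ⟨Φ, hlim⟩ := exists_tendstoLocallyUniformlyOn_ultrafilter 𝒰 φ (ball 0 1) (by
    intro x hx
    obtain ⟨t, hxt, ht1⟩ := exists_between (mem_ball_zero_iff.1 hx)
    obtain ⟨B, hB⟩ := eventually_norm_inv_le hn hl hhypl hconv ht1
    have hin : ∀ z ∈ ball x (t - ‖x‖), ‖z‖ < t := by
      intro z hz
      rw [mem_ball, dist_eq_norm] at hz
      linarith [norm_sub_norm_le z x]
    refine ⟨t - ‖x‖, by linarith, B, ?_⟩
    filter_upwards [h𝒰 hB] with n hBn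
    exact ⟨(hφd n).mono fun z hz => mem_ball_zero_iff.2 ((hin z hz).trans ht1),
      fun z hz => hBn z (hin z hz).le⟩)
  have hΦd : DifferentiableOn ℂ Φ (ball 0 1) := hlim.differentiableOn (.of_forall hφd) isOpen_ball
  have hΦ0 : Φ 0 = wl := by
    refine tendsto_nhds_unique (hlim.tendsto_at h0) ?_
    simp only [(hn _).inv_zero]
    exact hconv.1.mono_left h𝒰
  obtain ⟨c, hc, hcd⟩ := hl.deriv_pos
  have hdlim : Tendsto (fun n => (deriv (φ n) 0).re) 𝒰 (𝓝 (deriv Φ 0).re) :=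
    (Complex.continuous_re.tendsto _).comp
      ((hlim.deriv (.of_forall hφd) isOpen_ball).tendsto_at h0)
  -- This is `Φ'(0) ≥ ρ ψ'(0)`, because `φ n` and `f n` have reciprocal derivatives.
  have hlow : ∀ ρ : ℝ, 0 < ρ → ρ < 1 → ρ ≤ c * (deriv Φ 0).re := by
    intro ρ hρ hρ1
    refine ge_of_tendsto (hdlim.const_mul c) ?_
    filter_upwards [h𝒰 (eventually_norm_deriv_le hn hl hconv hρ hρ1)] with n hnn
    obtain ⟨cn, hcn, hcnd⟩ := (hn n).deriv_pos
    have h1 := (hn n).deriv_mul_deriv_inv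
    have h2 : cn * (deriv (φ n) 0).re = 1 := by
      have := congrArg Complex.re h1
      rwa [hcnd, Complex.re_ofReal_mul, Complex.one_re] at this
    simp only [hcnd, hcd, Complex.norm_real, Real.norm_of_nonneg hcn.le,
      Real.norm_of_nonneg hc.le] at hnn
    have h3 : 0 < (deriv (φ n) 0).re := pos_of_mul_pos_right (h2 ▸ one_pos) hcn.le
    calc ρ = ρ * cn * (deriv (φ n) 0).re := by rw [mul_assoc, h2, mul_one]
      _ ≤ c * (deriv (φ n) 0).re := by gcongr
  have hone : 1 ≤ c * (deriv Φ 0).re := by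
    refine le_of_forall_lt_imp_le_of_dense fun ρ hρ => ?_
    rcases le_or_gt ρ 0 with h | h
    · exact h.trans (by linarith [hlow (1 / 2) (by norm_num) (by norm_num)])
    · exact hlow ρ h hρ
  have hderiv : deriv Φ 0 ≠ 0 := by
    intro hcon
    rw [hcon] at hone
    norm_num at hone
  have hΦm := mapsTo_of_kernel 𝒰 h𝒰 hconv hφd (fun n => (hn n).maps_inv) hlim hΦd hΦ0 hderiv
  have hgd : DifferentiableOn ℂ (fl ∘ Φ) (ball 0 1) := hl.diff.comp hΦd hΦm
  have hg0 : (fl ∘ Φ) 0 = 0 := by simp [hΦ0, hl.map_base]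
  have hgm : Set.MapsTo (fl ∘ Φ) (ball 0 1) (closedBall ((fl ∘ Φ) 0) 1) := by
    intro z hz
    rw [hg0]
    exact ball_subset_closedBall (hl.maps (hΦm hz))
  have hgder : deriv (fl ∘ Φ) 0 = c * deriv Φ 0 := by
    have h1 : HasDerivAt fl c (Φ 0) := by
      rw [hΦ0, ← hcd]
      exact (hl.diff.differentiableAt (hl.isOpen.mem_nhds hl.mem)).hasDerivAt
    exact (h1.comp 0 (hΦd.differentiableAt (isOpen_ball.mem_nhds h0)).hasDerivAt).deriv
  have hle : ‖deriv (fl ∘ Φ) 0‖ ≤ 1 := by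
    simpa using Complex.norm_deriv_le_div_of_mapsTo_ball hgd hgm one_pos
  have hre : 1 ≤ (deriv (fl ∘ Φ) 0).re := by
    rwa [hgder, Complex.re_ofReal_mul]
  have hd1 : deriv (fl ∘ Φ) 0 = 1 := by
    have h1 : ‖deriv (fl ∘ Φ) 0‖ ^ 2 ≤ 1 := by
      nlinarith [norm_nonneg (deriv (fl ∘ Φ) 0)]
    rw [Complex.sq_norm, Complex.normSq_apply] at h1
    apply Complex.ext
    · simp only [Complex.one_re]
      nlinarith [mul_self_nonneg (deriv (fl ∘ Φ) 0).im]
    · simp only [Complex.one_im]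
      nlinarith [mul_self_nonneg (deriv (fl ∘ Φ) 0).im]
  have hrigid := Complex.affine_of_mapsTo_ball_of_norm_dslope_eq_div hgd hgm h0
    (by rw [dslope_same, hd1]; simp)
  refine hlim.congr_right fun z hz => ?_
  have h1 := hrigid hz
  rw [hg0, dslope_same, hd1] at h1
  simp only [Function.comp_apply, zero_add, sub_zero, smul_eq_mul, mul_one] at h1
  rw [← hl.left_inv _ (hΦm hz), h1]

/-- Convergence of the parametrizations passes to the inverse maps, since the `φ n` eventually
cover a fixed neighbourhood of `x` by points close to `fl x`. -/
lemma tendstoUniformlyOn_of_caratheodoryConv (hn : ∀ n, RiemannPair (Ω n) (w n) (f n) (φ n))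
    (hl : RiemannPair Ωl wl fl ψ) (hhypl : Ωlᶜ.Nonempty) (hconv : CaratheodoryConv Ω w Ωl wl)
    {K : Set ℂ} (hK : IsCompact K) (hKl : K ⊆ Ωl) : TendstoUniformlyOn f fl atTop K := by
  rw [Metric.tendstoUniformlyOn_iff]
  intro ε hε
  -- A set belongs to `atTop` as soon as it belongs to every finer ultrafilter.
  change {n | ∀ x ∈ K, dist (fl x) (f n x) < ε} ∈ atTop
  rw [mem_iff_ultrafilter]
  intro 𝒰 h𝒰
  have hlim := tendsto_inv_of_caratheodoryConv 𝒰 h𝒰 hn hl hhypl hconv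
  refine hK.induction_on (p := fun s => ∀ᶠ n in (𝒰 : Filter ℕ), ∀ x ∈ s, dist (fl x) (f n x) < ε)
    (by simp) ?_ ?_ ?_
  · intro s t hst h
    filter_upwards [h] with n hn x hx using hn x (hst hx)
  · intro s t hs ht
    filter_upwards [hs, ht] with n h1 h2 x hx
    exact hx.elim (h1 x) (h2 x)
  · intro x hx
    have hxl := hKl hx
    have hnc : ¬ ∀ᶠ z in 𝓝 (fl x), ψ z = ψ (fl x) := by
      intro hc
      have h1 : ∀ᶠ z in 𝓝[≠] (fl x), z = fl x := nhdsWithin_le_nhds (by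
        filter_upwards [hc, isOpen_ball.mem_nhds (hl.maps hxl)] with z hz hz1
        rw [← hl.right_inv z hz1, hz, hl.left_inv x hxl])
      obtain ⟨z, hz1, hz2⟩ := (h1.and self_mem_nhdsWithin).exists
      exact hz2 hz1
    obtain ⟨δ, hδ, hδs⟩ := exists_ball_subset_image isOpen_ball hlim
      (.of_forall fun n => (hn n).diff_inv) hl.diff_inv (hl.maps hxl) hnc
      (show 0 < ε / 3 by positivity)
    rw [hl.left_inv x hxl] at hδs
    have hcx := hl.diff.continuousOn.continuousAt (hl.isOpen.mem_nhds hxl)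
    refine ⟨ball x δ ∩ fl ⁻¹' ball (fl x) (ε / 3), mem_nhdsWithin_of_mem_nhds
      (inter_mem (ball_mem_nhds x hδ) (hcx.preimage_mem_nhds (ball_mem_nhds _ (by positivity)))),
      ?_⟩
    filter_upwards [hδs] with n hsub y hy
    obtain ⟨z, hz, rfl⟩ := hsub hy.1
    rw [(hn n).right_inv z hz.2]
    have h1 := mem_ball.1 hy.2
    have h2 := mem_closedBall.1 hz.1
    linarith [dist_triangle_right (fl (φ n z)) z (fl x)]

/-- The zero of `f n` near `wl`, provided by the covering lemma, is the base point `w n`. -/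
lemma tendsto_basePoint (hn : ∀ n, RiemannPair (Ω n) (w n) (f n) (φ n))
    (hl : RiemannPair Ωl wl fl ψ)
    (h : ∀ K : Set ℂ, IsCompact K → K ⊆ Ωl →
      (∀ᶠ n in atTop, K ⊆ Ω n) ∧ TendstoUniformlyOn f fl atTop K) :
    Tendsto w atTop (𝓝 wl) := by
  rw [Metric.tendsto_nhds]
  intro ε hε
  obtain ⟨R, hR, hRs⟩ := Metric.isOpen_iff.1 hl.isOpen wl hl.mem
  have hsub : closedBall wl (R / 2) ⊆ Ωl := (closedBall_subset_ball (by linarith)).trans hRs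
  obtain ⟨h1, h2⟩ := h _ (isCompact_closedBall wl (R / 2)) hsub
  have hball : ball wl (R / 2) ⊆ Ωl := ball_subset_closedBall.trans hsub
  have hwl : wl ∈ ball wl (R / 2) := mem_ball_self (by positivity)
  have hlim : TendstoLocallyUniformlyOn f fl atTop (ball wl (R / 2)) :=
    (h2.mono ball_subset_closedBall).tendstoLocallyUniformlyOn
  have hnc : ¬ ∀ᶠ z in 𝓝 wl, fl z = fl wl := by
    intro hc
    obtain ⟨c, hc0, hcd⟩ := hl.deriv_pos
    have h3 : fl =ᶠ[𝓝 wl] fun _ => fl wl := hc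
    rw [h3.deriv_eq, deriv_const] at hcd
    exact hc0.ne (by exact_mod_cast hcd)
  obtain ⟨δ, hδ, hδs⟩ := exists_ball_subset_image isOpen_ball hlim
    (h1.mono fun n hnn => (hn n).diff.mono (ball_subset_closedBall.trans hnn))
    (hl.diff.mono hball) hwl hnc (half_pos hε)
  filter_upwards [hδs, h1] with n h3 h4
  obtain ⟨z, hz, hz0⟩ := h3 (show (0 : ℂ) ∈ ball (fl wl) δ by
    rw [hl.map_base]
    exact mem_ball_self hδ)
  have h5 : z = w n := by
    rw [← (hn n).left_inv z (h4 (ball_subset_closedBall hz.2)), hz0, (hn n).inv_zero]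
  rw [← h5]
  exact (mem_closedBall.1 hz.1).trans_lt (half_lt_self hε)

/-- The kernel condition. A limit `g` of the `f n` on `U` is continuous with `‖g‖ < 1` and agrees
with `fl` on `U ∩ Ωl`; hence a point of `U` in the closure of `U ∩ Ωl` is `ψ` of its `g`-value
and lies in `Ωl`, so that `U ∩ Ωl` is closed in `U`. -/
lemma subset_of_frequently_subset (hn : ∀ n, RiemannPair (Ω n) (w n) (f n) (φ n))
    (hl : RiemannPair Ωl wl fl ψ)
    (h : ∀ K : Set ℂ, IsCompact K → K ⊆ Ωl →
      (∀ᶠ n in atTop, K ⊆ Ω n) ∧ TendstoUniformlyOn f fl atTop K)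
    {U : Set ℂ} (hU : IsOpen U) (hUc : IsConnected U) (hwU : wl ∈ U)
    (hfr : ∃ᶠ n in atTop, U ⊆ Ω n) : U ⊆ Ωl := by
  have hne : (atTop ⊓ 𝓟 {n | U ⊆ Ω n} : Filter ℕ).NeBot := by
    rwa [← frequently_mem_iff_neBot]
  -- An ultrafilter concentrated on the indices `n` with `U ⊆ Ω n`.
  set 𝒰 := Ultrafilter.of (atTop ⊓ 𝓟 {n | U ⊆ Ω n} : Filter ℕ) with h𝒰def
  have h𝒰le : (𝒰 : Filter ℕ) ≤ atTop ⊓ 𝓟 {n | U ⊆ Ω n} := Ultrafilter.of_le _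
  have h𝒰 : (𝒰 : Filter ℕ) ≤ atTop := h𝒰le.trans inf_le_left
  have hsub : ∀ᶠ n in (𝒰 : Filter ℕ), U ⊆ Ω n :=
    le_principal_iff.1 (h𝒰le.trans inf_le_right)
  obtain ⟨g, hg⟩ := exists_tendstoLocallyUniformlyOn_ultrafilter 𝒰 f U (by
    intro x hx
    obtain ⟨r, hr, hrs⟩ := Metric.isOpen_iff.1 hU x hx
    refine ⟨r, hr, 1, ?_⟩
    filter_upwards [hsub] with n hnn
    exact ⟨(hn n).diff.mono (hrs.trans hnn), fun z hz =>
      (mem_ball_zero_iff.1 ((hn n).maps (hnn (hrs hz)))).le⟩)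
  have hgd : DifferentiableOn ℂ g U :=
    hg.differentiableOn (hsub.mono fun n hnn => (hn n).diff.mono hnn) hU
  have hgeq : ∀ x ∈ U ∩ Ωl, g x = fl x := by
    intro x hx
    refine tendsto_nhds_unique (hg.tendsto_at hx.1) ?_
    have := (h {x} isCompact_singleton (Set.singleton_subset_iff.2 hx.2)).2
    exact (this.tendsto_at (Set.mem_singleton x)).mono_left h𝒰
  have hgle : ∀ x ∈ U, ‖g x‖ ≤ 1 := by
    intro x hx
    refine le_of_tendsto (hg.tendsto_at hx).norm ?_
    filter_upwards [hsub] with n hnn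
    exact (mem_ball_zero_iff.1 ((hn n).maps (hnn hx))).le
  -- Maximum principle: `‖g‖` attaining `1` would be constant on `U`, but `g wl = 0`.
  have hglt : ∀ x ∈ U, g x ∈ ball (0 : ℂ) 1 := by
    intro x hx
    rw [mem_ball_zero_iff]
    refine lt_of_le_of_ne (hgle x hx) fun h1 => ?_
    have hmax : IsMaxOn (norm ∘ g) U x := fun y hy => by
      simpa [h1] using hgle y hy
    have h2 := Complex.norm_eqOn_of_isPreconnected_of_isMaxOn hUc.isPreconnected hU hgd hx hmax hwU
    simp [hgeq wl ⟨hwU, hl.mem⟩, hl.map_base, h1] at h2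
  refine (hUc.isPreconnected.subset_of_closure_inter_subset (hU.inter hl.isOpen)
    ⟨wl, hwU, hwU, hl.mem⟩ ?_).trans Set.inter_subset_right
  rintro x ⟨hxc, hxU⟩
  refine ⟨hxU, ?_⟩
  have hne' : (𝓝[U ∩ Ωl] x).NeBot := mem_closure_iff_nhdsWithin_neBot.1 hxc
  have hlim1 : Tendsto (fun y => ψ (g y)) (𝓝[U ∩ Ωl] x) (𝓝 (ψ (g x))) := by
    have h1 : ContinuousAt ψ (g x) :=
      hl.diff_inv.continuousOn.continuousAt (isOpen_ball.mem_nhds (hglt x hxU))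
    have h2 : ContinuousAt g x := hgd.continuousOn.continuousAt (hU.mem_nhds hxU)
    exact (h1.tendsto.comp h2.tendsto).mono_left nhdsWithin_le_nhds
  have hlim2 : Tendsto (fun y => ψ (g y)) (𝓝[U ∩ Ωl] x) (𝓝 x) := by
    refine (tendsto_id.mono_left nhdsWithin_le_nhds).congr' ?_
    filter_upwards [self_mem_nhdsWithin] with y hy
    rw [hgeq y hy, hl.left_inv y hy.2, id]
  rw [tendsto_nhds_unique hlim2 hlim1]
  exact hl.maps_inv (hglt x hxU)

end Limits

/-- Carathéodory convergence is equivalent to locally uniform convergence of the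
normalized Riemann maps `f n : Ω n → 𝔻` together with eventual containment of
compacts. -/
theorem caratheodoryConv_iff_riemannMaps
    (Ω : ℕ → Set ℂ) (w : ℕ → ℂ) (Ωl : Set ℂ) (wl : ℂ)
    (hopen : ∀ n, IsOpen (Ω n)) (hconn : ∀ n, IsConnected (Ω n))
    (hsc : ∀ n, SimplyConnectedSpace (Ω n))
    (hhyp : ∀ n, (Ω n)ᶜ.Nonempty) (hw : ∀ n, w n ∈ Ω n)
    (hopenl : IsOpen Ωl) (hconnl : IsConnected Ωl)
    (hscl : SimplyConnectedSpace Ωl)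
    (hhypl : Ωlᶜ.Nonempty) (hwl : wl ∈ Ωl)
    (f : ℕ → ℂ → ℂ) (fl : ℂ → ℂ)
    (hf : ∀ n, DifferentiableOn ℂ (f n) (Ω n) ∧ Set.BijOn (f n) (Ω n) (ball 0 1) ∧
      f n (w n) = 0 ∧ 0 < (deriv (f n) (w n)).re ∧ (deriv (f n) (w n)).im = 0)
    (hfl : DifferentiableOn ℂ fl Ωl ∧ Set.BijOn fl Ωl (ball 0 1) ∧
      fl wl = 0 ∧ 0 < (deriv fl wl).re ∧ (deriv fl wl).im = 0) :
    CaratheodoryConv Ω w Ωl wl ↔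
      (∀ K : Set ℂ, IsCompact K → K ⊆ Ωl →
        (∀ᶠ n in atTop, K ⊆ Ω n) ∧ TendstoUniformlyOn f fl atTop K) := by
  choose φ hn using fun n => exists_riemannPair (hopen n) (hw n) (hf n)
  obtain ⟨ψ, hl⟩ := exists_riemannPair hopenl hwl hfl
  constructor
  · intro h K hK hKl
    exact ⟨h.2.1 K hK hKl, tendstoUniformlyOn_of_caratheodoryConv hn hl hhypl h hK hKl⟩
  · intro h
    exact ⟨tendsto_basePoint hn hl h, fun K hK hKl => (h K hK hKl).1,
      fun U hU hUc hwU hfr => subset_of_frequently_subset hn hl h hU hUc hwU hfr⟩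
end
end

section
/- For simply connected hyperbolic domains, if (Ω_n, w_n) and (Ω, w) have arbitrarily good common interior approximations, then the harmonic measures ω_{Ω_n}(w_n, ·) converge weakly to ω_Ω(w, ·). -/
/-!
Weak convergence of probability measures can be tested on bounded Lipschitz functions `f`. For such
an `f`, let `u n` and `q` be the bounded harmonic functions on `Ω n` and `Ωl` with boundary values
`f` (`dirichlet`). By the defining property of harmonic measure, `∫ f ∂μ n = u n (w n)` and
`∫ f ∂ν = q wl`, so it has to be shown that `u n (w n) → q wl`.

The engine is `decay`. If an open set `U` omits `a` and carries a continuous branch of `√(z - a)`, a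
subharmonic function on `U` which is nonpositive on the part of the boundary near `a` shrinks by the
factor `2 / 3` whenever the distance to `a` shrinks by the factor `100`, at a rate which does not
depend on `U`. The reason is that the preimage of `U` under `s ↦ s ^ 2 + a` consists of two disjoint
sheets exchanged by `s ↦ -s`. Placing the positive part of the function on one sheet only gives a
function `V` on a disc with `V s + V (-s) ≤ m`, whose harmonic majorant is at most `m / 2` at the
centre. Simple connectivity provides such a branch for every omitted point.

The decay estimate gives the regularity of boundary points needed for Perron's method (`perron`), the
passage from bounded to unbounded domains (`dirichlet`), a modulus of continuity at the boundary that
is uniform over all the domains (`boundary_estimate`), and a maximum principle for bounded harmonic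
functions with no condition at infinity (`phragmen_lindelof`).

Now take a sufficiently good common interior approximation `K`. On its frontier both `u n` and `q`
are close to `f`, as every point there is close to `∂Ω n` and `∂Ωl`. Hence `|u n - q|` is small on
the frontier of `K` and, by the maximum principle, on its interior. The interior contains `wl`, and
therefore `w n` for large `n`, and the continuity of `q` at `wl` finishes the proof.
-/

open MeasureTheory Metric Filter Topology

noncomputable section

/-! ### Averages and the mean value property -/

/-- Local area sub-mean value property at a point: the value is at most the average over all
sufficiently small discs. -/
def SubMV (v : ℂ → ℝ) (z : ℂ) : Prop :=
  ∀ᶠ r in 𝓝[>] (0 : ℝ), v z ≤ ⨍ x in ball z r, v x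

lemma integrableOn_ball_of_continuousOn {v : ℂ → ℝ} {z : ℂ} {r : ℝ}
    (hv : ContinuousOn v (closedBall z r)) : IntegrableOn v (ball z r) :=
  (hv.integrableOn_compact (isCompact_closedBall z r)).mono_set ball_subset_closedBall

lemma volume_real_ball_pos (z : ℂ) {r : ℝ} (hr : 0 < r) :
    0 < (volume : Measure ℂ).real (ball z r) := by
  rw [measureReal_def]
  exact ENNReal.toReal_pos (measure_ball_pos volume z hr).ne' measure_ball_lt_top.ne

lemma avg_mono {f g : ℂ → ℝ} {z : ℂ} {r : ℝ} (hf : IntegrableOn f (ball z r))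
    (hg : IntegrableOn g (ball z r)) (h : ∀ x ∈ ball z r, f x ≤ g x) :
    ⨍ x in ball z r, f x ≤ ⨍ x in ball z r, g x := by
  rw [setAverage_eq, setAverage_eq, smul_eq_mul, smul_eq_mul]
  exact mul_le_mul_of_nonneg_left (setIntegral_mono_on hf hg measurableSet_ball h)
    (inv_nonneg.2 measureReal_nonneg)

lemma avg_const (z : ℂ) {r : ℝ} (hr : 0 < r) (c : ℝ) : ⨍ _x in ball z r, c = c :=
  setAverage_const (measure_ball_pos volume z hr).ne' measure_ball_lt_top.ne c

lemma avg_add {f g : ℂ → ℝ} {z : ℂ} {r : ℝ} (hf : IntegrableOn f (ball z r))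
    (hg : IntegrableOn g (ball z r)) :
    ⨍ x in ball z r, (f x + g x) = (⨍ x in ball z r, f x) + ⨍ x in ball z r, g x := by
  simp only [setAverage_eq, smul_eq_mul]
  rw [integral_add hf hg, mul_add]

lemma avg_mul (c : ℝ) (f : ℂ → ℝ) (z : ℂ) (r : ℝ) :
    ⨍ x in ball z r, c * f x = c * ⨍ x in ball z r, f x := by
  simp only [setAverage_eq, smul_eq_mul]
  rw [integral_const_mul]; ring

lemma avg_sub {f g : ℂ → ℝ} {z : ℂ} {r : ℝ} (hf : IntegrableOn f (ball z r))
    (hg : IntegrableOn g (ball z r)) :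
    ⨍ x in ball z r, (f x - g x) = (⨍ x in ball z r, f x) - ⨍ x in ball z r, g x := by
  simp only [setAverage_eq, smul_eq_mul]
  rw [integral_sub hf hg, mul_sub]

lemma avg_congr {f g : ℂ → ℝ} {z : ℂ} {r : ℝ} (h : ∀ x ∈ ball z r, f x = g x) :
    ⨍ x in ball z r, f x = ⨍ x in ball z r, g x := by
  simp only [setAverage_eq]
  rw [setIntegral_congr_fun measurableSet_ball h]

/-- The mean value identity on a disc passes to uniform limits. -/
lemma avg_eq_of_approx {h : ℂ → ℝ} {z : ℂ} {r : ℝ} (hr : 0 < r)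
    (hc : ContinuousOn h (closedBall z r))
    (ha : ∀ ε > 0, ∃ g : ℂ → ℝ, ContinuousOn g (closedBall z r) ∧
      (∀ x ∈ closedBall z r, |h x - g x| ≤ ε) ∧ g z = ⨍ x in ball z r, g x) :
    h z = ⨍ x in ball z r, h x := by
  have key : ∀ ε > 0, |h z - ⨍ x in ball z r, h x| ≤ 0 + ε := by
    intro ε hε
    obtain ⟨g, hgc, hg, hgz⟩ := ha (ε / 2) (half_pos hε)
    have ih := integrableOn_ball_of_continuousOn hc
    have ig := integrableOn_ball_of_continuousOn hgc
    have i1 : IntegrableOn (fun _ : ℂ => ε / 2) (ball z r) :=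
      integrableOn_ball_of_continuousOn continuousOn_const
    have h1 : ⨍ x in ball z r, h x ≤ (⨍ x in ball z r, g x) + ε / 2 := by
      rw [← avg_const z hr (ε / 2), ← avg_add ig i1]
      refine avg_mono ih (ig.add i1) fun x hx => ?_
      have := abs_le.1 (hg x (ball_subset_closedBall hx))
      linarith
    have h2 : (⨍ x in ball z r, g x) ≤ (⨍ x in ball z r, h x) + ε / 2 := by
      rw [← avg_const z hr (ε / 2), ← avg_add ih i1]
      refine avg_mono ig (ih.add i1) fun x hx => ?_
      have := abs_le.1 (hg x (ball_subset_closedBall hx))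
      linarith
    have h3 := abs_le.1 (hg z (mem_closedBall_self hr.le))
    rw [abs_le]
    constructor <;> linarith
  have := le_of_forall_pos_le_add key
  have h0 := abs_eq_zero.1 (le_antisymm this (abs_nonneg _))
  linarith

/-- Integration in polar coordinates: equal circle averages give the same area average. -/
lemma avg_eq_of_circleAverage {φ : ℂ → ℝ} {z : ℂ} {r c : ℝ} (hr : 0 < r)
    (hc : ContinuousOn φ (closedBall z r))
    (h : ∀ ρ, 0 < ρ → ρ < r → Real.circleAverage φ z ρ = c) :
    ⨍ x in ball z r, φ x = c := by
  have iφ := integrableOn_ball_of_continuousOn hc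
  have i1 : IntegrableOn (fun _ : ℂ => c) (ball z r) :=
    integrableOn_ball_of_continuousOn continuousOn_const
  suffices H : ∫ x in ball z r, (φ x - c) = 0 by
    have := avg_sub iφ i1
    rw [avg_const z hr c, setAverage_eq, H, smul_zero] at this
    linarith
  set ψ : ℂ → ℝ := fun x => (ball z r).indicator (fun x => φ x - c) x with hψ
  have e1 : ∫ x in ball z r, (φ x - c) = ∫ x, ψ (x + z) := by
    rw [integral_add_right_eq_self, hψ, integral_indicator measurableSet_ball]
  rw [e1, ← Complex.integral_comp_polarCoord_symm]
  have e2 : ∀ p ∈ polarCoord.target, p.1 • ψ (Complex.polarCoord.symm p + z) =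
      (Set.Ioo (0 : ℝ) r ×ˢ Set.Ioo (-Real.pi) Real.pi).indicator
        (fun p : ℝ × ℝ => p.1 * (φ (circleMap z p.1 p.2) - c)) p := by
    rintro ⟨ρ, θ⟩ hp
    rw [polarCoord_target, Set.mem_prod] at hp
    have hρ : 0 < ρ := hp.1
    have hθ : θ ∈ Set.Ioo (-Real.pi) Real.pi := hp.2
    have e3 : Complex.polarCoord.symm (ρ, θ) + z = circleMap z ρ θ := by
      rw [Complex.polarCoord_symm_apply, circleMap, Complex.exp_mul_I]
      push_cast; ring
    rw [e3]; simp only [hψ]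
    by_cases hρr : ρ < r
    · rw [Set.indicator_of_mem, Set.indicator_of_mem]
      · rfl
      · exact ⟨⟨hρ, hρr⟩, hθ⟩
      · simp [circleMap, abs_of_pos hρ, hρr]
    · rw [Set.indicator_of_notMem, Set.indicator_of_notMem]
      · simp
      · rintro ⟨⟨_, h2⟩, _⟩
        exact hρr h2
      · simpa [circleMap, abs_of_pos hρ] using hρr
  have hmeas : MeasurableSet (Set.Ioo (0 : ℝ) r ×ˢ Set.Ioo (-Real.pi) Real.pi) :=
    measurableSet_Ioo.prod measurableSet_Ioo
  have hsub : Set.Ioo (0 : ℝ) r ×ˢ Set.Ioo (-Real.pi) Real.pi ⊆ polarCoord.target := by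
    rw [polarCoord_target]
    exact Set.prod_mono (fun x hx => hx.1) subset_rfl
  rw [setIntegral_congr_fun polarCoord.open_target.measurableSet e2,
    setIntegral_indicator hmeas, Set.inter_eq_right.2 hsub, Measure.volume_eq_prod,
    setIntegral_prod]
  · refine setIntegral_eq_zero_of_forall_eq_zero fun ρ hρ => ?_
    have h1 := h ρ hρ.1 hρ.2
    simp only
    rw [integral_const_mul]
    rw [← integral_Ioc_eq_integral_Ioo,
      ← intervalIntegral.integral_of_le (by linarith [Real.pi_pos])]
    have h2 : ∫ θ in (-Real.pi)..Real.pi, φ (circleMap z ρ θ) = 2 * Real.pi * c := by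
      have hper := (periodic_circleMap z ρ).comp φ
      have := hper.intervalIntegral_add_eq (-Real.pi) 0
      rw [Real.circleAverage_def, smul_eq_mul] at h1
      rw [zero_add, show -Real.pi + 2 * Real.pi = Real.pi by ring] at this
      simp only [Function.comp_def] at this
      rw [this, ← h1]
      field_simp
    have hii : IntervalIntegrable (fun θ => φ (circleMap z ρ θ)) volume (-Real.pi) Real.pi := by
      refine ContinuousOn.intervalIntegrable ?_
      refine hc.comp (continuous_circleMap z ρ).continuousOn fun θ _ => ?_
      simp [circleMap, abs_of_pos hρ.1, hρ.2.le]
    rw [intervalIntegral.integral_sub hii intervalIntegrable_const, h2,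
      intervalIntegral.integral_const, smul_eq_mul]
    ring
  · refine IntegrableOn.mono_set (t := Set.Icc 0 r ×ˢ Set.Icc (-Real.pi) Real.pi) ?_
      (Set.prod_mono Set.Ioo_subset_Icc_self Set.Ioo_subset_Icc_self)
    rw [← Measure.volume_eq_prod]
    refine ContinuousOn.integrableOn_compact (isCompact_Icc.prod isCompact_Icc) ?_
    refine continuousOn_fst.mul (ContinuousOn.sub (hc.comp ?_ ?_) continuousOn_const)
    · unfold circleMap; fun_prop
    · rintro ⟨ρ, θ⟩ ⟨h1, h2⟩
      simp [circleMap, abs_of_nonneg h1.1, h1.2]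

/-- Real parts of holomorphic functions have the area mean value property. -/
lemma avg_re_holomorphic {p : ℂ → ℂ} {W : Set ℂ} (hp : DifferentiableOn ℂ p W)
    {z : ℂ} {r : ℝ} (hr : 0 < r) (hW : closedBall z r ⊆ W) :
    (p z).re = ⨍ x in ball z r, (p x).re := by
  symm
  have hcont : ContinuousOn p (closedBall z r) := (hp.mono hW).continuousOn
  refine avg_eq_of_circleAverage hr (Complex.continuous_re.comp_continuousOn hcont) ?_
  intro ρ h0 h1
  have hd : DiffContOnCl ℂ p (ball z |ρ|) := by
    rw [abs_of_pos h0]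
    refine DifferentiableOn.diffContOnCl ?_
    rw [closure_ball z h0.ne']
    exact hp.mono ((closedBall_subset_closedBall h1.le).trans hW)
  have h2 := hd.circleAverage
  have hci : CircleIntegrable p z ρ := by
    refine (hcont.mono ?_).circleIntegrable h0.le
    exact sphere_subset_closedBall.trans (closedBall_subset_closedBall h1.le)
  have := Complex.reCLM.circleAverage_comp_comm hci
  rw [← h2]
  exact this

/-! ### Subharmonicity, the maximum principle and the Dirichlet problem on a disc -/

lemma eventually_small_closedBall {U : Set ℂ} {z : ℂ} (hU : U ∈ 𝓝 z) :
    ∀ᶠ r in 𝓝[>] (0 : ℝ), 0 < r ∧ closedBall z r ⊆ U := by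
  obtain ⟨ε, hε, h⟩ := nhds_basis_closedBall.mem_iff.1 hU
  filter_upwards [Ioc_mem_nhdsGT hε] with r hr
  exact ⟨hr.1, (closedBall_subset_closedBall hr.2).trans h⟩

lemma SubMV.congr {f g : ℂ → ℝ} {z : ℂ} (hf : SubMV f z) (h : f =ᶠ[𝓝 z] g) : SubMV g z := by
  filter_upwards [hf, eventually_small_closedBall h] with r hr hs
  have h1 : f z = g z := h.eq_of_nhds
  rw [← h1, ← avg_congr fun x hx => hs.2 (ball_subset_closedBall hx)]
  exact hr

lemma SubMV.mono {f g : ℂ → ℝ} {U : Set ℂ} {z : ℂ} (hf : SubMV f z) (hU : U ∈ 𝓝 z)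
    (hfc : ContinuousOn f U) (hgc : ContinuousOn g U) (h : ∀ x ∈ U, f x ≤ g x)
    (hz : f z = g z) : SubMV g z := by
  filter_upwards [hf, eventually_small_closedBall hU] with r hr hs
  rw [← hz]
  exact hr.trans (avg_mono (integrableOn_ball_of_continuousOn (hfc.mono hs.2))
    (integrableOn_ball_of_continuousOn (hgc.mono hs.2))
    fun x hx => h x (hs.2 (ball_subset_closedBall hx)))

lemma SubMV.sup {f g : ℂ → ℝ} {U : Set ℂ} {z : ℂ} (hf : SubMV f z) (hg : SubMV g z)
    (hU : U ∈ 𝓝 z) (hfc : ContinuousOn f U) (hgc : ContinuousOn g U) :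
    SubMV (fun x => max (f x) (g x)) z := by
  rcases le_total (f z) (g z) with h | h
  · exact hg.mono hU hgc (hfc.sup hgc) (fun x _ => le_max_right _ _) (max_eq_right h).symm
  · exact hf.mono hU hfc (hfc.sup hgc) (fun x _ => le_max_left _ _) (max_eq_left h).symm

lemma SubMV.add {f g : ℂ → ℝ} {U : Set ℂ} {z : ℂ} (hf : SubMV f z) (hg : SubMV g z)
    (hU : U ∈ 𝓝 z) (hfc : ContinuousOn f U) (hgc : ContinuousOn g U) :
    SubMV (fun x => f x + g x) z := by
  filter_upwards [hf, hg, eventually_small_closedBall hU] with r hr hr' hs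
  rw [avg_add (integrableOn_ball_of_continuousOn (hfc.mono hs.2))
    (integrableOn_ball_of_continuousOn (hgc.mono hs.2))]
  exact add_le_add hr hr'

lemma SubMV.const_mul {f : ℂ → ℝ} {z : ℂ} (hf : SubMV f z) {c : ℝ} (hc : 0 ≤ c) :
    SubMV (fun x => c * f x) z := by
  filter_upwards [hf] with r hr
  rw [avg_mul]
  exact mul_le_mul_of_nonneg_left hr hc

lemma subMV_const (c : ℝ) (z : ℂ) : SubMV (fun _ => c) z := by
  filter_upwards [self_mem_nhdsWithin] with r hr
  rw [avg_const z hr]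

lemma HasMVP.subMV {h : ℂ → ℝ} {U : Set ℂ} (hh : HasMVP h U) (hU : IsOpen U) {z : ℂ}
    (hz : z ∈ U) : SubMV h z := by
  filter_upwards [eventually_small_closedBall (hU.mem_nhds hz)] with r hr
  exact (hh z hz r hr.1 hr.2).le

lemma HasMVP.mono {h : ℂ → ℝ} {U V : Set ℂ} (hh : HasMVP h U) (hV : V ⊆ U) : HasMVP h V :=
  fun z hz r hr hs => hh z (hV hz) r hr (hs.trans hV)

lemma HasMVP.sub {f g : ℂ → ℝ} {U : Set ℂ} (hf : HasMVP f U) (hg : HasMVP g U)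
    (hfc : ContinuousOn f U) (hgc : ContinuousOn g U) : HasMVP (fun x => f x - g x) U := by
  intro z hz r hr hs
  rw [avg_sub (integrableOn_ball_of_continuousOn (hfc.mono hs))
    (integrableOn_ball_of_continuousOn (hgc.mono hs)), ← hf z hz r hr hs, ← hg z hz r hr hs]

lemma HasMVP.add {f g : ℂ → ℝ} {U : Set ℂ} (hf : HasMVP f U) (hg : HasMVP g U)
    (hfc : ContinuousOn f U) (hgc : ContinuousOn g U) : HasMVP (fun x => f x + g x) U := by
  intro z hz r hr hs
  rw [avg_add (integrableOn_ball_of_continuousOn (hfc.mono hs))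
    (integrableOn_ball_of_continuousOn (hgc.mono hs)), ← hf z hz r hr hs, ← hg z hz r hr hs]

lemma hasMVP_const (c : ℝ) (U : Set ℂ) : HasMVP (fun _ => c) U :=
  fun z _ _ hr _ => (avg_const z hr c).symm

lemma hasMVP_re {p : ℂ → ℂ} {U : Set ℂ} (hp : DifferentiableOn ℂ p U) :
    HasMVP (fun z => (p z).re) U :=
  fun _ _ _ hr hs => avg_re_holomorphic hp hr hs

/-- Locally uniform limits keep the mean value property. -/
lemma hasMVP_of_approx {h : ℂ → ℝ} {U : Set ℂ}
    (ha : ∀ z r, closedBall z r ⊆ U → ∀ ε > 0, ∃ g : ℂ → ℝ, ContinuousOn g U ∧ HasMVP g U ∧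
      ∀ x ∈ closedBall z r, |h x - g x| ≤ ε) : HasMVP h U := by
  intro z hz r hr hs
  refine avg_eq_of_approx hr ?_ ?_
  · refine continuousOn_of_uniform_approx_of_continuousOn fun u hu => ?_
    obtain ⟨ε, hε, hεu⟩ := Metric.mem_uniformity_dist.1 hu
    obtain ⟨g, hgc, -, hg⟩ := ha z r hs (ε / 2) (half_pos hε)
    refine ⟨g, hgc.mono hs, fun y hy => hεu ?_⟩
    rw [Real.dist_eq]
    linarith [hg y hy]
  · intro ε hε
    obtain ⟨g, hgc, hgm, hg⟩ := ha z r hs ε hε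
    exact ⟨g, hgc.mono hs, hg, hgm z hz r hr hs⟩

/-- Maximum principle on bounded open sets, with boundary values taken as upper limits.
At a rightmost maximum point the sub-mean value inequality would force the maximum to be attained at
every point of a small disc, in particular further to the right. -/
theorem max_principle {W : Set ℂ} (hWo : IsOpen W) (hWb : Bornology.IsBounded W) {φ : ℂ → ℝ}
    (hc : ContinuousOn φ W) (hs : ∀ z ∈ W, SubMV φ z)
    (hb : ∀ ζ ∈ frontier W, ∀ ε > 0, ∀ᶠ z in 𝓝[W] ζ, φ z < ε) : ∀ z ∈ W, φ z ≤ 0 := by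
  by_contra! hcon
  obtain ⟨z₀, hz₀, hpos⟩ := hcon
  -- superlevel sets are compact subsets of `W`
  have hcpt : ∀ c > 0, IsCompact {z | z ∈ W ∧ c ≤ φ z} := by
    intro c hc0
    refine isCompact_of_isClosed_isBounded ?_ (hWb.subset fun z hz => hz.1)
    refine isClosed_of_closure_subset fun ζ hζ => ?_
    have hζW : ζ ∈ closure W := closure_mono (fun z hz => hz.1) hζ
    by_cases hW : ζ ∈ W
    · refine ⟨hW, ?_⟩
      by_contra! hlt
      have h1 : ∀ᶠ z in 𝓝 ζ, φ z < c :=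
        ((hc.continuousAt (hWo.mem_nhds hW)).eventually_lt_const hlt)
      obtain ⟨z, hz1, hz2⟩ := (mem_closure_iff_frequently.1 hζ).and_eventually h1 |>.exists
      exact absurd hz2 (not_lt.2 hz1.2)
    · have hfr : ζ ∈ frontier W := by
        rw [hWo.frontier_eq]; exact ⟨hζW, hW⟩
      have h1 := eventually_nhdsWithin_iff.1 (hb ζ hfr c hc0)
      obtain ⟨z, hz1, hz2⟩ := (mem_closure_iff_frequently.1 hζ).and_eventually h1 |>.exists
      exact absurd (hz2 hz1.1) (not_lt.2 hz1.2)
  obtain ⟨z₁, hz₁, hmax⟩ := (hcpt _ hpos).exists_isMaxOn ⟨z₀, hz₀, le_rfl⟩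
    (hc.mono fun z hz => hz.1)
  have hM : ∀ z ∈ W, φ z ≤ φ z₁ := by
    intro z hz
    rcases le_total (φ z₀) (φ z) with h | h
    · exact hmax ⟨hz, h⟩
    · exact h.trans hz₁.2
  have hMpos : 0 < φ z₁ := hpos.trans_le hz₁.2
  -- the rightmost point where the maximum is attained
  obtain ⟨p, hp, hpmax⟩ := (hcpt _ hMpos).exists_isMaxOn ⟨z₁, hz₁.1, le_rfl⟩
    Complex.continuous_re.continuousOn
  have hpM : φ p = φ z₁ := le_antisymm (hM p hp.1) hp.2
  obtain ⟨r, hr1, hr0, hrW⟩ :=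
    ((hs p hp.1).and (eventually_small_closedBall (hWo.mem_nhds hp.1))).exists
  have hcr : ContinuousOn φ (closedBall p r) := hc.mono hrW
  have hi := integrableOn_ball_of_continuousOn hcr
  have i1 : IntegrableOn (fun _ : ℂ => φ z₁) (ball p r) :=
    integrableOn_ball_of_continuousOn continuousOn_const
  have havg : ⨍ x in ball p r, (φ z₁ - φ x) ≤ 0 := by
    rw [avg_sub i1 hi, avg_const p hr0, ← hpM]
    linarith
  have hint : ∫ x in ball p r, (φ z₁ - φ x) ≤ 0 := by
    rw [setAverage_eq, smul_eq_mul] at havg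
    by_contra! hlt
    exact absurd havg (not_le.2 (mul_pos (inv_pos.2 (volume_real_ball_pos p hr0)) hlt))
  set q : ℂ := p + ((r / 2 : ℝ) : ℂ) with hq
  have hqb : q ∈ ball p r := by
    simp only [hq, mem_ball, dist_self_add_left, Complex.norm_real, Real.norm_eq_abs]
    rw [abs_of_pos (half_pos hr0)]; linarith
  have hqW : q ∈ W := hrW (ball_subset_closedBall hqb)
  have hqlt : φ q < φ z₁ := by
    by_contra! hge
    have : q.re ≤ p.re := hpmax ⟨hqW, hge⟩
    simp [hq] at this
    linarith
  have hnn : 0 ≤ᵐ[volume.restrict (ball p r)] fun x => φ z₁ - φ x := by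
    filter_upwards [ae_restrict_mem measurableSet_ball] with x hx
    exact sub_nonneg.2 (hM x (hrW (ball_subset_closedBall hx)))
  have hzero : ∫ x in ball p r, (φ z₁ - φ x) = 0 :=
    le_antisymm hint (integral_nonneg_of_ae hnn)
  have hae := (setIntegral_eq_zero_iff_of_nonneg_ae hnn (i1.sub hi)).1 hzero
  -- the open set near `q` where `φ` is smaller than its maximum has positive measure
  have hopen : ∀ᶠ x in 𝓝 q, φ x < φ z₁ ∧ x ∈ ball p r :=
    ((hc.continuousAt (hWo.mem_nhds hqW)).eventually_lt_const hqlt).and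
      (isOpen_ball.mem_nhds hqb)
  have hpos' : 0 < volume {x | φ x < φ z₁ ∧ x ∈ ball p r} := Measure.measure_pos_of_mem_nhds _ hopen
  have hnull : volume {x | φ x < φ z₁ ∧ x ∈ ball p r} = 0 := by
    have h2 := (ae_restrict_iff' measurableSet_ball).1 hae
    refine measure_mono_null (fun x hx => ?_) h2
    simp only [Set.mem_compl_iff, Set.mem_ofPred_eq]
    intro h3
    have : φ z₁ - φ x = 0 := h3 hx.2
    linarith [hx.1]
  exact hpos'.ne' hnull

/-- Maximum principle for functions continuous up to the boundary. -/
theorem max_principle_cont {W : Set ℂ} (hWo : IsOpen W) (hWb : Bornology.IsBounded W)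
    {φ : ℂ → ℝ} (hc : ContinuousOn φ (closure W)) (hs : ∀ z ∈ W, SubMV φ z)
    (hb : ∀ ζ ∈ frontier W, φ ζ ≤ 0) : ∀ z ∈ closure W, φ z ≤ 0 := by
  have h := max_principle hWo hWb (hc.mono subset_closure) hs fun ζ hζ ε hε =>
    ((hc ζ (frontier_subset_closure hζ)).mono subset_closure).eventually_lt_const
      ((hb ζ hζ).trans_lt hε)
  intro z hz
  by_cases hzW : z ∈ W
  · exact h z hzW
  · exact hb z (by rw [hWo.frontier_eq]; exact ⟨hz, hzW⟩)

lemma abs_sub_le_of_frontier {W : Set ℂ} (hWo : IsOpen W) (hWb : Bornology.IsBounded W)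
    {f g : ℂ → ℝ} (hfc : ContinuousOn f (closure W)) (hgc : ContinuousOn g (closure W))
    (hf : HasMVP f W) (hg : HasMVP g W) {ε : ℝ} (hb : ∀ ζ ∈ frontier W, |f ζ - g ζ| ≤ ε) :
    ∀ z ∈ closure W, |f z - g z| ≤ ε := by
  have key : ∀ f g : ℂ → ℝ, ContinuousOn f (closure W) → ContinuousOn g (closure W) →
      HasMVP f W → HasMVP g W → (∀ ζ ∈ frontier W, |f ζ - g ζ| ≤ ε) →
      ∀ z ∈ closure W, f z - g z ≤ ε := by
    intro f g hfc hgc hf hg hb z hz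
    have hm : HasMVP (fun x => (f x - g x) - ε) W :=
      (hf.sub hg (hfc.mono subset_closure) (hgc.mono subset_closure)).sub (hasMVP_const ε W)
        ((hfc.sub hgc).mono subset_closure) continuousOn_const
    have := max_principle_cont hWo hWb (φ := fun x => (f x - g x) - ε)
      ((hfc.sub hgc).sub continuousOn_const) (fun z hz => hm.subMV hWo hz)
      (fun ζ hζ => by have := (abs_le.1 (hb ζ hζ)).2; linarith) z hz
    linarith
  intro z hz
  rw [abs_le]
  constructor
  · have := key g f hgc hfc hg hf (fun ζ hζ => by rw [abs_sub_comm]; exact hb ζ hζ) z hz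
    linarith
  · exact key f g hfc hgc hf hg hb z hz

/-- A sequence that is Cauchy at an explicit rate on `S` has a limit with the same rate. -/
lemma exists_limit_of_rate {S : Set ℂ} (u : ℕ → ℂ → ℝ) {b : ℕ → ℝ}
    (hb : Tendsto b atTop (𝓝 0))
    (h : ∀ n m, n ≤ m → ∀ z ∈ S, |u n z - u m z| ≤ b n) :
    ∃ H : ℂ → ℝ, ∀ n, ∀ z ∈ S, |H z - u n z| ≤ b n := by
  have hlim : ∀ z : ℂ, ∃ l : ℝ, z ∈ S → Tendsto (fun n => u n z) atTop (𝓝 l) := by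
    intro z
    by_cases hz : z ∈ S
    · have : CauchySeq fun n => u n z := by
        refine cauchySeq_of_le_tendsto_0' b (fun n m hnm => ?_) hb
        rw [Real.dist_eq]
        exact h n m hnm z hz
      obtain ⟨l, hl⟩ := cauchySeq_tendsto_of_complete this
      exact ⟨l, fun _ => hl⟩
    · exact ⟨0, fun h => absurd h hz⟩
  choose H hH using hlim
  refine ⟨H, fun n z hz => ?_⟩
  have h1 : Tendsto (fun m => |u m z - u n z|) atTop (𝓝 |H z - u n z|) :=
    ((hH z hz).sub_const _).abs
  refine le_of_tendsto h1 ?_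
  filter_upwards [eventually_ge_atTop n] with m hm
  rw [abs_sub_comm]
  exact h n m hm z hz

lemma continuousOn_of_approx {S : Set ℂ} {h : ℂ → ℝ}
    (ha : ∀ ε > 0, ∃ g : ℂ → ℝ, ContinuousOn g S ∧ ∀ x ∈ S, |h x - g x| ≤ ε) :
    ContinuousOn h S := by
  refine continuousOn_of_uniform_approx_of_continuousOn fun u hu => ?_
  obtain ⟨ε, hε, hεu⟩ := Metric.mem_uniformity_dist.1 hu
  obtain ⟨g, hgc, hg⟩ := ha (ε / 2) (half_pos hε)
  refine ⟨g, hgc, fun y hy => hεu ?_⟩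
  rw [Real.dist_eq]
  linarith [hg y hy]

/-- Trigonometric polynomials: continuous functions on a circle are approximated by real parts of
entire functions. -/
lemma exists_entire_approx_sphere {c : ℂ} {r : ℝ} (hr : 0 < r) {g : ℂ → ℝ}
    (hg : ContinuousOn g (sphere c r)) {ε : ℝ} (hε : 0 < ε) :
    ∃ p : ℂ → ℂ, Differentiable ℂ p ∧ ∀ z ∈ sphere c r, |g z - (p z).re| ≤ ε := by
  have : Fact (0 < 2 * Real.pi) := ⟨Real.two_pi_pos⟩
  let e : AddCircle (2 * Real.pi) → ℂ := fun x => c + r * (AddCircle.toCircle x : ℂ)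
  have he : Continuous e :=
    continuous_const.add (continuous_const.mul
      (continuous_subtype_val.comp AddCircle.continuous_toCircle))
  have hes : ∀ x, e x ∈ sphere c r := by
    intro x
    have h1 : ‖(AddCircle.toCircle x : ℂ)‖ = 1 := Circle.norm_coe _
    simp [e, abs_of_pos hr, h1]
  let f : C(AddCircle (2 * Real.pi), ℂ) :=
    ⟨fun x => (g (e x) : ℂ), Complex.continuous_ofReal.comp (hg.comp_continuous he hes)⟩
  have hf : f ∈ (Submodule.span ℂ (Set.range <| @fourier (2 * Real.pi))).topologicalClosure := by
    rw [span_fourier_closure_eq_top]; trivial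
  obtain ⟨q, hq, hqf⟩ := Metric.mem_closure_iff.1 hf ε hε
  -- positive frequencies are powers of `(z - c) / r`, negative ones conjugates of such powers, and
  -- `p₁ + conj p₂` has the same real part as the entire function `p₁ + p₂`
  have hspan : ∀ q ∈ Submodule.span ℂ (Set.range <| @fourier (2 * Real.pi)),
      ∃ p₁ p₂ : ℂ → ℂ, Differentiable ℂ p₁ ∧ Differentiable ℂ p₂ ∧
        ∀ x, q x = p₁ (e x) + (starRingEnd ℂ) (p₂ (e x)) := by
    intro q hq
    have hez : ∀ x, (e x - c) / r = (AddCircle.toCircle x : ℂ) := by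
      intro x
      have : (r : ℂ) ≠ 0 := by exact_mod_cast hr.ne'
      simp only [e]; field_simp; ring
    induction hq using Submodule.span_induction with
    | mem q hq =>
      obtain ⟨n, rfl⟩ := hq
      rcases Int.eq_nat_or_neg n with ⟨k, rfl | rfl⟩
      · refine ⟨fun z => ((z - c) / r) ^ k, fun _ => 0, by fun_prop, by fun_prop, fun x => ?_⟩
        simp only [hez]
        simp [fourier_apply, AddCircle.toCircle_nsmul]
      · refine ⟨fun _ => 0, fun z => ((z - c) / r) ^ k, by fun_prop, by fun_prop, fun x => ?_⟩
        simp only [hez]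
        rw [fourier_neg]
        simp [fourier_apply, AddCircle.toCircle_nsmul]
    | zero => exact ⟨fun _ => 0, fun _ => 0, by fun_prop, by fun_prop, by simp⟩
    | add a b _ _ ha hb =>
      obtain ⟨p₁, p₂, h1, h2, h⟩ := ha
      obtain ⟨p₁', p₂', h1', h2', h'⟩ := hb
      refine ⟨p₁ + p₁', p₂ + p₂', h1.add h1', h2.add h2', fun x => ?_⟩
      simp [h, h']; ring
    | smul t a _ ha =>
      obtain ⟨p₁, p₂, h1, h2, h⟩ := ha
      refine ⟨fun z => t * p₁ z, fun z => (starRingEnd ℂ) t * p₂ z, h1.const_mul _,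
        h2.const_mul _, fun x => ?_⟩
      simp [h]; ring
  obtain ⟨p₁, p₂, h1, h2, hp⟩ := hspan q hq
  refine ⟨p₁ + p₂, h1.add h2, fun z hz => ?_⟩
  obtain ⟨x, rfl⟩ : ∃ x, e x = z := by
    have hz' : ‖z - c‖ = r := by simpa [dist_eq_norm] using hz
    have hmem : (z - c) / r ∈ Submonoid.unitSphere ℂ := by
      simp [Submonoid.unitSphere, hz', abs_of_pos hr, hr.ne']
    obtain ⟨x, hx⟩ := (AddCircle.homeomorphCircle (T := 2 * Real.pi) Real.two_pi_pos.ne').surjective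
      (⟨(z - c) / r, hmem⟩ : Circle)
    refine ⟨x, ?_⟩
    have hx' : (AddCircle.toCircle x : ℂ) = (z - c) / r := by
      rw [← AddCircle.homeomorphCircle_apply Real.two_pi_pos.ne', hx]
    have : (r : ℂ) ≠ 0 := by exact_mod_cast hr.ne'
    simp only [e, hx']; field_simp; ring
  have hd : dist (f x) (q x) ≤ ε := (ContinuousMap.dist_apply_le_dist x).trans hqf.le
  have h3 : (f x - q x).re = g (e x) - ((p₁ + p₂) (e x)).re := by
    simp [f, hp]
  rw [← h3]
  rw [dist_eq_norm] at hd
  exact (Complex.abs_re_le_norm _).trans hd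

/-- The Dirichlet problem on a disc. The solution is a uniform limit on the closed disc of real
parts of entire functions, which makes it stable under composition with holomorphic maps. -/
theorem disc_dirichlet {c : ℂ} {r : ℝ} (hr : 0 < r) {g : ℂ → ℝ}
    (hg : ContinuousOn g (sphere c r)) :
    ∃ H : ℂ → ℝ, ContinuousOn H (closedBall c r) ∧ (∀ z ∈ sphere c r, H z = g z) ∧
      ∀ ε > 0, ∃ p : ℂ → ℂ, Differentiable ℂ p ∧ ∀ z ∈ closedBall c r, |H z - (p z).re| ≤ ε := by
  have h0 : ∀ n : ℕ, (0 : ℝ) < 1 / (n + 1) := fun n => Nat.one_div_pos_of_nat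
  choose p hpd hp using fun n : ℕ => exists_entire_approx_sphere hr hg (h0 n)
  have hpc : ∀ n, Continuous fun z => (p n z).re := fun n =>
    Complex.continuous_re.comp (hpd n).continuous
  have hb : Tendsto (fun n : ℕ => 2 * (1 / ((n : ℝ) + 1))) atTop (𝓝 0) := by
    simpa using tendsto_one_div_add_atTop_nhds_zero_nat.const_mul (2 : ℝ)
  have hcl : closure (ball c r) = closedBall c r := closure_ball c hr.ne'
  obtain ⟨H, hH⟩ := exists_limit_of_rate (S := closedBall c r) (fun n z => (p n z).re) hb (by
    intro n m hnm
    rw [← hcl]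
    refine abs_sub_le_of_frontier isOpen_ball isBounded_ball (hpc n).continuousOn
      (hpc m).continuousOn (hasMVP_re (hpd n).differentiableOn)
      (hasMVP_re (hpd m).differentiableOn) fun ζ hζ => ?_
    rw [frontier_ball c hr.ne'] at hζ
    have h1 := abs_le.1 (hp n ζ hζ)
    have h2 := abs_le.1 (hp m ζ hζ)
    have h3 : (1 : ℝ) / (m + 1) ≤ 1 / (n + 1) := Nat.one_div_le_one_div hnm
    rw [abs_le]
    constructor <;> linarith)
  have happ : ∀ ε > 0, ∃ n : ℕ, 2 * (1 / ((n : ℝ) + 1)) < ε := fun ε hε =>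
    (hb.eventually_lt_const hε).exists
  refine ⟨H, ?_, ?_, ?_⟩
  · refine continuousOn_of_approx fun ε hε => ?_
    obtain ⟨n, hn⟩ := happ ε hε
    exact ⟨_, (hpc n).continuousOn, fun x hx => (hH n x hx).trans hn.le⟩
  · intro z hz
    have key : ∀ ε > 0, |H z - g z| ≤ 0 + ε := by
      intro ε hε
      obtain ⟨n, hn⟩ := happ (ε / 2) (half_pos hε)
      have h1 := abs_le.1 (hH n z (sphere_subset_closedBall hz))
      have h2 := abs_le.1 (hp n z hz)
      have h3 := h0 n
      rw [abs_le]
      constructor <;> linarith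
    have := abs_eq_zero.1 (le_antisymm (le_of_forall_pos_le_add key) (abs_nonneg _))
    linarith
  · intro ε hε
    obtain ⟨n, hn⟩ := happ ε hε
    exact ⟨p n, hpd n, fun z hz => (hH n z hz).trans hn.le⟩

/-! ### Decay near a boundary point -/

/-- `U` carries a continuous branch of `√(z - a)`. -/
def HasRoot (U : Set ℂ) (a : ℂ) : Prop :=
  ∃ σ : ℂ → ℂ, ContinuousOn σ U ∧ ∀ z ∈ U, σ z ^ 2 = z - a

lemma HasRoot.mono {U V : Set ℂ} {a : ℂ} (h : HasRoot U a) (hV : V ⊆ U) : HasRoot V a := by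
  obtain ⟨σ, h1, h2⟩ := h
  exact ⟨σ, h1.mono hV, fun z hz => h2 z (hV hz)⟩

/-- A continuous branch of the square root is automatically holomorphic. -/
lemma differentiableOn_root {U : Set ℂ} (hU : IsOpen U) {a : ℂ} (ha : a ∉ U) {σ : ℂ → ℂ}
    (hσc : ContinuousOn σ U) (hσ : ∀ z ∈ U, σ z ^ 2 = z - a) : DifferentiableOn ℂ σ U := by
  intro z hz
  have hne : σ z ≠ 0 := by
    intro h0
    have := hσ z hz
    rw [h0] at this
    have hza : z = a := by
      have : z - a = 0 := by rw [← this]; ring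
      exact sub_eq_zero.1 this
    exact ha (hza ▸ hz)
  have hd : HasDerivAt (fun s : ℂ => s ^ 2 + a) (2 * σ z) (σ z) := by
    simpa using (hasDerivAt_pow 2 (σ z)).add_const a
  have := hd.of_local_left_inverse (hσc.continuousAt (hU.mem_nhds hz))
    (mul_ne_zero two_ne_zero hne) (by
      filter_upwards [hU.mem_nhds hz] with y hy
      simp [hσ y hy])
  exact this.differentiableAt.differentiableWithinAt

/-- Harmonic functions obtained as uniform limits of real parts of entire functions pull back to
harmonic functions under holomorphic maps. -/
lemma hasMVP_comp {B W : Set ℂ} {H : ℂ → ℝ} {q : ℂ → ℂ}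
    (hH : ∀ ε > 0, ∃ p : ℂ → ℂ, Differentiable ℂ p ∧ ∀ z ∈ B, |H z - (p z).re| ≤ ε)
    (hq : DifferentiableOn ℂ q W) (hm : Set.MapsTo q W B) : HasMVP (fun z => H (q z)) W := by
  refine hasMVP_of_approx fun z r hs ε hε => ?_
  obtain ⟨p, hp, hpH⟩ := hH ε hε
  have hpq : DifferentiableOn ℂ (fun z => p (q z)) W :=
    hp.comp_differentiableOn hq
  exact ⟨fun z => (p (q z)).re, Complex.continuous_re.comp_continuousOn hpq.continuousOn,
    hasMVP_re hpq, fun x hx => hpH _ (hm (hs hx))⟩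

lemma SubMV.sub_hasMVP {f h : ℂ → ℝ} {W : Set ℂ} {z : ℂ} (hf : SubMV f z) (hh : HasMVP h W)
    (hW : IsOpen W) (hz : z ∈ W) (hfc : ContinuousOn f W) (hhc : ContinuousOn h W) :
    SubMV (fun x => f x - h x) z := by
  filter_upwards [hf, eventually_small_closedBall (hW.mem_nhds hz)] with r hr hs
  rw [avg_sub (integrableOn_ball_of_continuousOn (hfc.mono hs.2))
    (integrableOn_ball_of_continuousOn (hhc.mono hs.2)), ← hh z hz r hs.1 hs.2]
  exact sub_le_sub_right hr _

/-- A Harnack inequality from the area mean value property. -/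
lemma harnack {H : ℂ → ℝ} {ρ : ℝ} (hρ : 0 < ρ) (hc : ContinuousOn H (ball 0 ρ))
    (hH : HasMVP H (ball 0 ρ)) (h0 : ∀ z ∈ ball 0 ρ, 0 ≤ H z) {s : ℂ} (hs : ‖s‖ ≤ ρ / 10) :
    H s ≤ 4 / 3 * H 0 := by
  have hsub : ball s (8 / 10 * ρ) ⊆ ball 0 (9 / 10 * ρ) := by
    refine ball_subset_ball' ?_
    rw [dist_zero_right]; linarith
  have hs1 : closedBall s (8 / 10 * ρ) ⊆ ball 0 ρ := by
    refine closedBall_subset_ball' ?_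
    rw [dist_zero_right]; linarith
  have hs2 : closedBall (0 : ℂ) (9 / 10 * ρ) ⊆ ball 0 ρ := closedBall_subset_ball (by linarith)
  have hsb : s ∈ ball (0 : ℂ) ρ := by
    rw [mem_ball_zero_iff]; linarith
  have e1 := hH s hsb _ (by positivity) hs1
  have e2 := hH 0 (mem_ball_self hρ) _ (by positivity) hs2
  have hv : ∀ (z : ℂ) (r : ℝ), 0 < r → (volume : Measure ℂ).real (ball z r) = Real.pi * r ^ 2 := by
    intro z r hr
    rw [measureReal_def, Complex.volume_ball]
    simp [hr.le, mul_comm]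
  have hint : ∫ x in ball s (8 / 10 * ρ), H x ≤ ∫ x in ball 0 (9 / 10 * ρ), H x := by
    refine setIntegral_mono_set (integrableOn_ball_of_continuousOn (hc.mono hs2)) ?_
      hsub.eventuallyLE
    filter_upwards [ae_restrict_mem measurableSet_ball] with x hx
    exact h0 x (hs2 (ball_subset_closedBall hx))
  rw [setAverage_eq, hv _ _ (by positivity), smul_eq_mul] at e1 e2
  have hpos : 0 ≤ ∫ x in ball 0 (9 / 10 * ρ), H x := by
    refine setIntegral_nonneg measurableSet_ball fun x hx => h0 x (hs2 (ball_subset_closedBall hx))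
  set I := ∫ x in ball 0 (9 / 10 * ρ), H x
  set J := ∫ x in ball s (8 / 10 * ρ), H x
  have hpi := Real.pi_pos
  have e1' : H s = (Real.pi * ρ ^ 2)⁻¹ * (100 / 64) * J := by
    rw [e1]; field_simp; norm_num; ring
  have e2' : H 0 = (Real.pi * ρ ^ 2)⁻¹ * (100 / 81) * I := by
    rw [e2]; field_simp; norm_num; ring
  rw [e1', e2']
  have h3 : 0 ≤ (Real.pi * ρ ^ 2)⁻¹ := by positivity
  nlinarith [mul_nonneg h3 hpos, mul_le_mul_of_nonneg_left hint h3]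

/-- One step of the decay estimate. On the square-root cover, `v⁺` and its reflection have disjoint
supports, so the harmonic majorant `H` on the disc of the cover satisfies `H(s) + H(-s) ≤ m`, hence
`H(0) ≤ m / 2`; Harnack's inequality carries this to nearby points. -/
lemma decay_step {U : Set ℂ} (hU : IsOpen U) {a : ℂ} (ha : a ∉ U) (hr : HasRoot U a)
    {v : ℂ → ℝ} (hvc : ContinuousOn v (closure U)) (hvs : ∀ z ∈ U, SubMV v z)
    {R : ℝ} (hR : 0 < R) {m : ℝ} (hm : 0 ≤ m)
    (hfr : ∀ ζ ∈ frontier U, ζ ∈ closedBall a R → v ζ ≤ 0)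
    (hle : ∀ z ∈ U, z ∈ closedBall a R → v z ≤ m) :
    ∀ z ∈ U, z ∈ closedBall a (R / 100) → v z ≤ 2 / 3 * m := by
  classical
  obtain ⟨σ, hσc, hσ⟩ := hr
  have hσd := differentiableOn_root hU ha hσc hσ
  set ρ := √R with hρdef
  have hρ : 0 < ρ := Real.sqrt_pos.2 hR
  have hρ2 : ρ ^ 2 = R := Real.sq_sqrt hR.le
  -- `D` is the sheet of the cover `s ↦ s ^ 2 + a` of `U` picked out by `σ`; its other sheet is `-D`
  set D : Set ℂ := {s | s ^ 2 + a ∈ U ∧ σ (s ^ 2 + a) = s} with hD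
  set V : ℂ → ℝ := fun s => if s ∈ D then max (v (s ^ 2 + a)) 0 else 0 with hV
  have hV0 : ∀ s, 0 ≤ V s := by
    intro s; simp only [hV]; split_ifs
    · exact le_max_right _ _
    · exact le_rfl
  have hsq : Continuous fun s : ℂ => s ^ 2 + a := by fun_prop
  have hball : ∀ s ∈ closedBall (0 : ℂ) ρ, s ^ 2 + a ∈ closedBall a R := by
    intro s hs
    rw [mem_closedBall_zero_iff] at hs
    rw [mem_closedBall, dist_eq_norm, add_sub_cancel_right, norm_pow, ← hρ2]
    gcongr
  have hτ : ∀ s, s ^ 2 + a ∈ U → ContinuousAt (fun s => σ (s ^ 2 + a)) s := fun s hs =>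
    (hσc.continuousAt (hU.mem_nhds hs)).comp (f := fun s : ℂ => s ^ 2 + a) hsq.continuousAt
  have hne : ∀ s, s ^ 2 + a ∈ U → s ≠ 0 := by
    rintro s hs rfl; exact ha (by simpa using hs)
  have hpm : ∀ s, s ^ 2 + a ∈ U → σ (s ^ 2 + a) = s ∨ σ (s ^ 2 + a) = -s := by
    intro s hs
    have := hσ _ hs
    rw [add_sub_cancel_right] at this
    exact sq_eq_sq_iff_eq_or_eq_neg.1 this
  have hUn : ∀ s, s ^ 2 + a ∈ U → ∀ᶠ t in 𝓝 s, t ^ 2 + a ∈ U := fun s hs =>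
    hsq.continuousAt.preimage_mem_nhds (hU.mem_nhds hs)
  -- over `U` both `D` and its complement are locally open; elsewhere `v⁺` tends to `0`
  have hVc : ContinuousOn V (closedBall 0 ρ) := by
    intro s hs
    refine ContinuousAt.continuousWithinAt ?_
    by_cases hsU : s ^ 2 + a ∈ U
    · rcases hpm s hsU with h | h
      · have hev : ∀ᶠ t in 𝓝 s, t ∈ D := by
          have h2 : σ (s ^ 2 + a) + s ≠ 0 := by
            rw [h, ← two_mul]; exact mul_ne_zero two_ne_zero (hne s hsU)
          filter_upwards [hUn s hsU, ((hτ s hsU).add continuousAt_id).eventually_ne h2] with t ht ht2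
          refine ⟨ht, (hpm t ht).resolve_right fun h3 => ht2 ?_⟩
          simp [h3]
        have heq : V =ᶠ[𝓝 s] fun t => max (v (t ^ 2 + a)) 0 := by
          filter_upwards [hev] with t ht
          simp only [hV, if_pos ht]
        refine ContinuousAt.congr ?_ heq.symm
        refine ContinuousAt.sup ?_ continuousAt_const
        refine ContinuousAt.comp (f := fun s : ℂ => s ^ 2 + a) ?_ hsq.continuousAt
        exact (hvc.mono subset_closure).continuousAt (hU.mem_nhds hsU)
      · have hev : ∀ᶠ t in 𝓝 s, t ∉ D := by
          have h2 : σ (s ^ 2 + a) - s ≠ 0 := by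
            rw [h]
            have : -s - s = -(2 * s) := by ring
            rw [this]
            exact neg_ne_zero.2 (mul_ne_zero two_ne_zero (hne s hsU))
          filter_upwards [((hτ s hsU).sub continuousAt_id).eventually_ne h2] with t ht2
          intro h3
          exact ht2 (by simp [h3.2])
        have heq : V =ᶠ[𝓝 s] fun _ => 0 := by
          filter_upwards [hev] with t ht
          simp only [hV, if_neg ht]
        exact continuousAt_const.congr heq.symm
    · have hVs : V s = 0 := by
        simp only [hV]; rw [if_neg]; exact fun h => hsU h.1
      rw [Metric.continuousAt_iff']
      intro ε hε
      by_cases hcl : s ^ 2 + a ∈ closure U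
      · have hfrs : s ^ 2 + a ∈ frontier U := by
          rw [hU.frontier_eq]; exact ⟨hcl, hsU⟩
        have h1 : v (s ^ 2 + a) < ε := (hfr _ hfrs (hball s hs)).trans_lt hε
        have h2 := eventually_nhdsWithin_iff.1 ((hvc _ hcl).eventually_lt_const h1)
        filter_upwards [hsq.continuousAt.eventually h2] with t ht
        rw [hVs, Real.dist_eq, sub_zero, abs_of_nonneg (hV0 t)]
        simp only [hV]
        split_ifs with hD'
        · exact max_lt (ht (subset_closure hD'.1)) hε
        · exact hε
      · filter_upwards [hsq.continuousAt.preimage_mem_nhds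
          (isClosed_closure.isOpen_compl.mem_nhds hcl)] with t ht
        have : V t = 0 := by
          simp only [hV]; rw [if_neg]; exact fun h => ht (subset_closure h.1)
        rw [hVs, this, dist_self]; exact hε
  have hVm : ∀ s ∈ closedBall (0 : ℂ) ρ, V s ≤ m := by
    intro s hs
    simp only [hV]; split_ifs with h
    · exact max_le (hle _ h.1 (hball s hs)) hm
    · exact hm
  have hVV : ∀ s ∈ closedBall (0 : ℂ) ρ, V s + V (-s) ≤ m := by
    intro s hs
    have hs' : -s ∈ closedBall (0 : ℂ) ρ := by simpa using hs
    by_cases h1 : s ∈ D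
    · have h2 : -s ∉ D := by
        rintro ⟨-, h2⟩
        rw [neg_sq, h1.2] at h2
        exact hne s h1.1 (self_eq_neg.1 h2)
      have : V (-s) = 0 := by simp only [hV]; rw [if_neg h2]
      rw [this, add_zero]; exact hVm s hs
    · have : V s = 0 := by simp only [hV]; rw [if_neg h1]
      rw [this, zero_add]; exact hVm _ hs'
  -- the harmonic function on the disc with boundary values `V`
  obtain ⟨H, hHc, hHs, hHa⟩ := disc_dirichlet hρ (hVc.mono sphere_subset_closedBall)
  have hcl : closure (ball (0 : ℂ) ρ) = closedBall 0 ρ := closure_ball 0 hρ.ne'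
  have hfb : frontier (ball (0 : ℂ) ρ) = sphere 0 ρ := frontier_ball 0 hρ.ne'
  have hHm : HasMVP H (ball 0 ρ) :=
    hasMVP_comp (q := fun z => z) hHa differentiableOn_id fun z hz => ball_subset_closedBall hz
  have hHm' : HasMVP (fun z => H (-z)) (ball 0 ρ) :=
    hasMVP_comp (q := fun z => -z) hHa differentiable_neg.differentiableOn fun z hz => by
      simpa using ball_subset_closedBall hz
  have hHc' : ContinuousOn (fun z => H (-z)) (closedBall 0 ρ) :=
    hHc.comp continuous_neg.continuousOn fun z hz => by simpa using hz
  have hH0 : ∀ z ∈ closedBall (0 : ℂ) ρ, 0 ≤ H z := by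
    intro z hz
    have hm0 : HasMVP (fun x => (0 : ℝ) - H x) (ball 0 ρ) :=
      (hasMVP_const 0 _).sub hHm continuousOn_const (hHc.mono ball_subset_closedBall)
    have := max_principle_cont (φ := fun x => 0 - H x) isOpen_ball isBounded_ball
      (by rw [hcl]; exact continuousOn_const.sub hHc) (fun z hz => hm0.subMV isOpen_ball hz)
      (fun ζ hζ => by
        rw [hfb] at hζ
        rw [hHs ζ hζ]; linarith [hV0 ζ]) z (hcl ▸ hz)
    linarith
  have hHhalf : H 0 ≤ m / 2 := by
    have hm0 : HasMVP (fun x => (H x + H (-x)) - m) (ball 0 ρ) :=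
      (hHm.add hHm' (hHc.mono ball_subset_closedBall) (hHc'.mono ball_subset_closedBall)).sub
        (hasMVP_const m _)
        ((hHc.add hHc').mono ball_subset_closedBall) continuousOn_const
    have := max_principle_cont (φ := fun x => (H x + H (-x)) - m) isOpen_ball isBounded_ball
      (by rw [hcl]; exact (hHc.add hHc').sub continuousOn_const)
      (fun z hz => hm0.subMV isOpen_ball hz)
      (fun ζ hζ => by
        rw [hfb] at hζ
        rw [hHs ζ hζ, hHs (-ζ) (by simpa using hζ)]
        linarith [hVV ζ (sphere_subset_closedBall hζ)]) 0 (hcl ▸ mem_closedBall_self hρ.le)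
    rw [neg_zero] at this
    linarith
  -- comparison of `v⁺` with `H ∘ σ` downstairs
  set W : Set ℂ := U ∩ ball a R with hWdef
  have hWo : IsOpen W := hU.inter isOpen_ball
  have hσn : ∀ z ∈ U, ‖σ z‖ ^ 2 = dist z a := by
    intro z hz; rw [← norm_pow, hσ z hz, dist_eq_norm]
  have hσb : ∀ z ∈ U, z ∈ closedBall a R → σ z ∈ closedBall (0 : ℂ) ρ := by
    intro z hz hzR
    rw [mem_closedBall_zero_iff]
    refine le_of_sq_le_sq ?_ hρ.le
    rw [hσn z hz, hρ2]; exact hzR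
  have hcomp : ContinuousOn (fun z => H (σ z)) (U ∩ closedBall a R) :=
    hHc.comp (hσc.mono Set.inter_subset_left) fun z hz => hσb z hz.1 hz.2
  have hWsub : W ⊆ U ∩ closedBall a R := Set.inter_subset_inter_right U ball_subset_closedBall
  have hHσ : HasMVP (fun z => H (σ z)) W :=
    hasMVP_comp hHa (hσd.mono Set.inter_subset_left) fun z hz =>
      hσb z hz.1 (ball_subset_closedBall hz.2)
  have hvU : ContinuousOn v U := hvc.mono subset_closure
  have hvp : ContinuousOn (fun z => max (v z) 0) (closure U) := hvc.sup continuousOn_const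
  have key := max_principle (φ := fun z => max (v z) 0 - H (σ z)) hWo
    (isBounded_ball.subset Set.inter_subset_right)
    ((hvp.mono (Set.inter_subset_left.trans subset_closure)).sub (hcomp.mono hWsub))
    (fun z hz => ((hvs z hz.1).sup (subMV_const 0 z) (hU.mem_nhds hz.1) hvU
      continuousOn_const).sub_hasMVP hHσ hWo hz
        (hvp.mono (Set.inter_subset_left.trans subset_closure)) (hcomp.mono hWsub))
    (by
      intro ζ hζ ε hε
      have hζW : ζ ∉ W := by rw [hWo.frontier_eq] at hζ; exact hζ.2
      have hζcl := frontier_subset_closure hζ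
      have hζU : ζ ∈ closure U := closure_mono Set.inter_subset_left hζcl
      have hζR : ζ ∈ closedBall a R :=
        closure_ball_subset_closedBall (closure_mono Set.inter_subset_right hζcl)
      by_cases hU' : ζ ∈ U
      · have hdist : dist ζ a = R := le_antisymm hζR (not_lt.1 fun h => hζW ⟨hU', h⟩)
        have hs : σ ζ ∈ sphere (0 : ℂ) ρ := by
          rw [mem_sphere_zero_iff_norm]
          refine (sq_eq_sq₀ (norm_nonneg _) hρ.le).1 ?_
          rw [hσn ζ hU', hρ2, hdist]
        have hsz : σ ζ ^ 2 + a = ζ := by rw [hσ ζ hU']; ring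
        have hVζ : V (σ ζ) = max (v ζ) 0 := by
          have : σ ζ ∈ D := by
            refine ⟨?_, ?_⟩ <;> rw [hsz]
            exact hU'
          simp only [hV]; rw [if_pos this, hsz]
        have hval : max (v ζ) 0 - H (σ ζ) < ε := by
          rw [hHs _ hs, hVζ, sub_self]; exact hε
        have hcts : ContinuousWithinAt (fun z => max (v z) 0 - H (σ z)) (U ∩ closedBall a R) ζ :=
          ((hvp.mono (Set.inter_subset_left.trans subset_closure)).sub hcomp) ζ ⟨hU', hζR⟩
        exact (hcts.mono hWsub).eventually_lt_const hval
      · have hfrζ : ζ ∈ frontier U := by rw [hU.frontier_eq]; exact ⟨hζU, hU'⟩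
        have h1 : max (v ζ) 0 < ε := max_lt ((hfr ζ hfrζ hζR).trans_lt hε) hε
        have h2 := ((hvp ζ hζU).mono
          (Set.inter_subset_left.trans subset_closure : W ⊆ closure U)).eventually_lt_const h1
        filter_upwards [h2, self_mem_nhdsWithin] with z hz hzW
        have := hH0 _ (hσb z hzW.1 (ball_subset_closedBall hzW.2))
        linarith)
  intro z hzU hz
  have hzd : dist z a ≤ R / 100 := hz
  have hzW : z ∈ W := ⟨hzU, by rw [mem_ball]; linarith⟩
  have h1 : max (v z) 0 - H (σ z) ≤ 0 := key z hzW
  have h2 : ‖σ z‖ ≤ ρ / 10 := by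
    refine le_of_sq_le_sq ?_ (by positivity)
    rw [hσn z hzU, div_pow, hρ2]; linarith
  have h3 := harnack hρ (hHc.mono ball_subset_closedBall) hHm
    (fun z hz => hH0 z (ball_subset_closedBall hz)) h2
  have h4 := le_max_left (v z) 0
  linarith

/-- Scale-invariant decay near a boundary point: a subharmonic function with nonpositive boundary
values near `a` decays geometrically in the logarithm of the distance to `a`. The rate is absolute,
which gives regularity of the boundary uniformly over all domains with a square root branch. -/
theorem decay {U : Set ℂ} (hU : IsOpen U) {a : ℂ} (ha : a ∉ U) (hr : HasRoot U a)
    {v : ℂ → ℝ} (hvc : ContinuousOn v (closure U)) (hvs : ∀ z ∈ U, SubMV v z)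
    {R : ℝ} (hR : 0 < R) {m : ℝ} (hm : 0 ≤ m)
    (hfr : ∀ ζ ∈ frontier U, ζ ∈ closedBall a R → v ζ ≤ 0)
    (hle : ∀ z ∈ U, z ∈ closedBall a R → v z ≤ m) (k : ℕ) :
    ∀ z ∈ U, z ∈ closedBall a (R / 100 ^ k) → v z ≤ (2 / 3) ^ k * m := by
  induction k with
  | zero => simpa using hle
  | succ k ih =>
    have hsub : closedBall a (R / 100 ^ k) ⊆ closedBall a R :=
      closedBall_subset_closedBall (div_le_self hR.le (one_le_pow₀ (by norm_num)))
    have := decay_step hU ha hr hvc hvs (R := R / 100 ^ k) (by positivity)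
      (m := (2 / 3) ^ k * m) (by positivity) (fun ζ h1 h2 => hfr ζ h1 (hsub h2)) ih
    intro z hz hzR
    refine (this z hz ?_).trans (le_of_eq (by ring))
    rwa [div_div, ← pow_succ]

/-! ### Perron's method -/

/-- Harnack's inequality for discs of nearby centres, with constant tending to `1` as the centres
merge. -/
lemma harnack_near {H : ℂ → ℝ} {W : Set ℂ} (hc : ContinuousOn H W) (hH : HasMVP H W)
    (h0 : ∀ z ∈ W, 0 ≤ H z) {x y : ℂ} {ρ δ : ℝ} (hρ : 0 < ρ) (hxy : dist x y ≤ δ)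
    (hW : closedBall y (ρ + δ) ⊆ W) : H x ≤ ((ρ + δ) / ρ) ^ 2 * H y := by
  have hδ : 0 ≤ δ := dist_nonneg.trans hxy
  have hsub : closedBall x ρ ⊆ closedBall y (ρ + δ) := closedBall_subset_closedBall' (by linarith)
  have hsub' : ball x ρ ⊆ ball y (ρ + δ) := ball_subset_ball' (by linarith)
  have e1 := hH x (hW (hsub (mem_closedBall_self hρ.le))) ρ hρ (hsub.trans hW)
  have e2 := hH y (hW (mem_closedBall_self (by linarith))) (ρ + δ) (by linarith) hW
  have hv : ∀ z : ℂ, ∀ r : ℝ, 0 < r → (volume : Measure ℂ).real (ball z r) = Real.pi * r ^ 2 := by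
    intro z r hr
    rw [measureReal_def, Complex.volume_ball]
    simp [hr.le, mul_comm]
  have hint : ∫ x in ball x ρ, H x ≤ ∫ x in ball y (ρ + δ), H x := by
    refine setIntegral_mono_set (integrableOn_ball_of_continuousOn (hc.mono hW)) ?_
      hsub'.eventuallyLE
    filter_upwards [ae_restrict_mem measurableSet_ball] with x hx
    exact h0 x (hW (ball_subset_closedBall hx))
  rw [setAverage_eq, hv _ _ (by positivity), smul_eq_mul] at e1 e2
  set I := ∫ x in ball x ρ, H x
  set J := ∫ x in ball y (ρ + δ), H x
  have hpi := Real.pi_pos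
  have : ((ρ + δ) / ρ) ^ 2 * H y = (Real.pi * ρ ^ 2)⁻¹ * J := by
    have : ρ + δ ≠ 0 := by positivity
    rw [e2]; field_simp
  rw [this, e1]
  exact mul_le_mul_of_nonneg_left hint (by positivity)

/-- The Perron family: continuous subharmonic functions with boundary values below `F`, and
bounded below by `-M`. -/
structure PerronClass (U : Set ℂ) (F : ℂ → ℝ) (M : ℝ) (v : ℂ → ℝ) : Prop where
  cont : ContinuousOn v (closure U)
  sub : ∀ z ∈ U, SubMV v z
  bdry : ∀ ζ ∈ frontier U, v ζ ≤ F ζ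
  below : ∀ z ∈ closure U, -M ≤ v z

lemma PerronClass.le {U : Set ℂ} (hU : IsOpen U) (hb : Bornology.IsBounded U) {F : ℂ → ℝ} {M : ℝ}
    (hFM : ∀ z ∈ closure U, |F z| ≤ M) {v : ℂ → ℝ} (hv : PerronClass U F M v) :
    ∀ z ∈ closure U, v z ≤ M := by
  intro z hz
  have := max_principle_cont hU hb (φ := fun x => v x + -M) (hv.cont.add continuousOn_const)
    (fun z hz => (hv.sub z hz).add (subMV_const _ z) (hU.mem_nhds hz)
      (hv.cont.mono subset_closure) continuousOn_const)
    (fun ζ hζ => by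
      linarith [hv.bdry ζ hζ, le_of_abs_le (hFM ζ (frontier_subset_closure hζ))]) z hz
  linarith

lemma PerronClass.max {U : Set ℂ} (hU : IsOpen U) {F : ℂ → ℝ} {M : ℝ} {v w : ℂ → ℝ}
    (hv : PerronClass U F M v) (hw : PerronClass U F M w) :
    PerronClass U F M (fun x => max (v x) (w x)) where
  cont := hv.cont.sup hw.cont
  sub z hz := (hv.sub z hz).sup (hw.sub z hz) (hU.mem_nhds hz) (hv.cont.mono subset_closure)
    (hw.cont.mono subset_closure)
  bdry ζ hζ := max_le (hv.bdry ζ hζ) (hw.bdry ζ hζ)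
  below z hz := (hv.below z hz).trans (le_max_left _ _)

/-- Poisson modification on a disc stays in the Perron family. -/
lemma PerronClass.modify {U : Set ℂ} (hU : IsOpen U) {F : ℂ → ℝ} {M : ℝ} {v : ℂ → ℝ}
    (hv : PerronClass U F M v) {c : ℂ} {r : ℝ} (hr : 0 < r) (hs : closedBall c r ⊆ U) :
    ∃ v', PerronClass U F M v' ∧ (∀ x ∈ closure U, v x ≤ v' x) ∧ HasMVP v' (closedBall c r) := by
  classical
  have hvU : ContinuousOn v U := hv.cont.mono subset_closure
  obtain ⟨P, hPc, hPs, hPa⟩ := disc_dirichlet hr (g := v)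
    (hvU.mono (sphere_subset_closedBall.trans hs))
  have hPm : HasMVP P (closedBall c r) := by
    refine hasMVP_of_approx fun z t ht ε hε => ?_
    obtain ⟨p, hp, hpa⟩ := hPa ε hε
    exact ⟨fun z => (p z).re, (Complex.continuous_re.comp hp.continuous).continuousOn,
      hasMVP_re hp.differentiableOn, fun x hx => hpa x (ht hx)⟩
  have hPmb := hPm.mono ball_subset_closedBall
  have hvP : ∀ z ∈ closedBall c r, v z - P z ≤ 0 := by
    have := max_principle_cont isOpen_ball (isBounded_ball (x := c) (r := r))
      (φ := fun z => v z - P z)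
    rw [closure_ball c hr.ne', frontier_ball c hr.ne'] at this
    refine this ((hvU.mono hs).sub hPc) (fun z hz => ?_) fun ζ hζ => by rw [hPs ζ hζ, sub_self]
    exact (hv.sub z (hs (ball_subset_closedBall hz))).sub_hasMVP hPmb isOpen_ball hz
      (hvU.mono (ball_subset_closedBall.trans hs)) (hPc.mono ball_subset_closedBall)
  set v' : ℂ → ℝ := fun x => if x ∈ closedBall c r then P x else v x with hv'
  have e1 : ∀ x ∈ closedBall c r, v' x = P x := fun x hx => by simp only [hv']; rw [if_pos hx]
  have e2 : ∀ x, x ∉ ball c r → v' x = v x := by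
    intro x hx
    by_cases h : x ∈ closedBall c r
    · rw [e1 x h]
      exact hPs x (le_antisymm h (not_lt.1 hx))
    · simp only [hv']; rw [if_neg h]
  have hle : ∀ x, v x ≤ v' x := by
    intro x
    by_cases h : x ∈ closedBall c r
    · rw [e1 x h]; linarith [hvP x h]
    · rw [e2 x (fun h' => h (ball_subset_closedBall h'))]
  have hcont : ContinuousOn v' (closure U) := by
    have h1 : ContinuousOn v' (closedBall c r) := hPc.congr e1
    have h2 : ContinuousOn v' (closure U \ ball c r) :=
      (hv.cont.mono Set.sdiff_subset).congr fun x hx => e2 x hx.2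
    refine (h1.union_of_isClosed h2 isClosed_closedBall
      (isClosed_closure.inter isOpen_ball.isClosed_compl)).mono fun x hx => ?_
    by_cases h : x ∈ ball c r
    · exact Or.inl (ball_subset_closedBall h)
    · exact Or.inr ⟨hx, h⟩
  refine ⟨v', ⟨hcont, fun z hz => ?_, fun ζ hζ => ?_, fun z hz => (hv.below z hz).trans (hle z)⟩,
    fun x _ => hle x, ?_⟩
  · by_cases h : z ∈ ball c r
    · refine (hPmb.subMV isOpen_ball h).congr ?_
      filter_upwards [isOpen_ball.mem_nhds h] with x hx
      exact (e1 x (ball_subset_closedBall hx)).symm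
    · exact (hv.sub z hz).mono (hU.mem_nhds hz) hvU (hcont.mono subset_closure)
        (fun x _ => hle x) (e2 z h).symm
  · rw [e2 ζ]
    · exact hv.bdry ζ hζ
    · intro h
      rw [hU.frontier_eq] at hζ
      exact hζ.2 (hs (ball_subset_closedBall h))
  · intro z hz t ht hts
    rw [e1 z hz, hPm z hz t ht hts]
    exact avg_congr fun x hx => (e1 x (hts (ball_subset_closedBall hx))).symm

/-- Perron's solution of the Dirichlet problem for subharmonic boundary data. As `F` itself belongs to
the Perron family, it bounds the solution from below, and only the upper bound at the boundary needs
the decay estimate. -/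
theorem perron {U : Set ℂ} (hU : IsOpen U) (hb : Bornology.IsBounded U)
    (hroot : ∀ a ∈ frontier U, HasRoot U a) {F : ℂ → ℝ} (hFc : ContinuousOn F (closure U))
    (hFs : ∀ z ∈ U, SubMV F z) :
    ∃ h : ℂ → ℝ, ContinuousOn h (closure U) ∧ HasMVP h U ∧ ∀ ζ ∈ frontier U, h ζ = F ζ := by
  have hcpt : IsCompact (closure U) := hb.isCompact_closure
  obtain ⟨M, hFM⟩ : ∃ M, ∀ z ∈ closure U, |F z| ≤ M := by
    obtain ⟨M, hM⟩ := hcpt.exists_bound_of_continuousOn hFc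
    exact ⟨M, fun z hz => by simpa using hM z hz⟩
  have hF : PerronClass U F M F := ⟨hFc, hFs, fun _ _ => le_rfl, fun z hz => (abs_le.1 (hFM z hz)).1⟩
  set u : ℂ → ℝ := fun x => ⨆ v : {v // PerronClass U F M v}, v.1 x with hu
  have hbdd : ∀ x ∈ closure U, BddAbove (Set.range fun v : {v // PerronClass U F M v} => v.1 x) :=
    fun x hx => ⟨M, by rintro _ ⟨v, rfl⟩; exact v.2.le hU hb hFM x hx⟩
  have hle : ∀ v, PerronClass U F M v → ∀ x ∈ closure U, v x ≤ u x :=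
    fun v hv x hx => le_ciSup (hbdd x hx) ⟨v, hv⟩
  have : Nonempty {v // PerronClass U F M v} := ⟨⟨F, hF⟩⟩
  have hsup : ∀ x c, (∀ v, PerronClass U F M v → v x ≤ c) → u x ≤ c :=
    fun x c h => ciSup_le fun v => h v.1 v.2
  have huM : ∀ x ∈ closure U, u x ≤ M := fun x hx => hsup x M fun v hv => hv.le hU hb hFM x hx
  have hnear : ∀ x ∈ closure U, ∀ ε > 0, ∃ v, PerronClass U F M v ∧ u x - ε < v x := by
    intro x hx ε hε
    obtain ⟨v, hv⟩ := exists_lt_of_lt_ciSup (show u x - ε < ⨆ v : {v // PerronClass U F M v}, v.1 x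
      by simp only [hu]; linarith)
    exact ⟨v.1, v.2, hv⟩
  have hufr : ∀ ζ ∈ frontier U, u ζ = F ζ := fun ζ hζ =>
    le_antisymm (hsup ζ _ fun v hv => hv.bdry ζ hζ) (hle F hF ζ (frontier_subset_closure hζ))
  -- Harnack for the modified members of the family passes to the supremum
  have hharn : ∀ x y : ℂ, ∀ ρ δ : ℝ, 0 < ρ → dist x y ≤ δ → closedBall y (ρ + δ) ⊆ U →
      u x + M ≤ ((ρ + δ) / ρ) ^ 2 * (u y + M) := by
    intro x y ρ δ hρ hxy hs
    have hδ : 0 ≤ δ := dist_nonneg.trans hxy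
    have hxU : x ∈ U := hs (by rw [mem_closedBall]; linarith)
    have hyU : y ∈ U := hs (mem_closedBall_self (by linarith))
    suffices u x ≤ ((ρ + δ) / ρ) ^ 2 * (u y + M) - M by linarith
    refine hsup x _ fun v hv => ?_
    obtain ⟨v', hv', hvv, hm⟩ := hv.modify hU (by positivity) hs
    have hc' : ContinuousOn v' (closedBall y (ρ + δ)) :=
      hv'.cont.mono (hs.trans subset_closure)
    have h1 := harnack_near (H := fun z => v' z + M) (hc'.add continuousOn_const)
      (hm.add (hasMVP_const M _) hc' continuousOn_const)
      (fun z hz => by linarith [hv'.below z (subset_closure (hs hz))]) hρ hxy subset_rfl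
    have h2 := hvv x (subset_closure hxU)
    have h3 := hle v' hv' y (subset_closure hyU)
    have h4 : ((ρ + δ) / ρ) ^ 2 * (v' y + M) ≤ ((ρ + δ) / ρ) ^ 2 * (u y + M) :=
      mul_le_mul_of_nonneg_left (by linarith) (by positivity)
    linarith
  have hucont : ContinuousOn u U := by
    intro y hy
    refine ContinuousAt.continuousWithinAt ?_
    obtain ⟨r, hr, hrU⟩ := Metric.isOpen_iff.1 hU y hy
    set ρ := r / 4 with hρdef
    have hρ : 0 < ρ := by positivity
    have hd : Tendsto (fun x => dist x y) (𝓝 y) (𝓝 0) := by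
      have : Continuous fun x => dist x y := continuous_id.dist continuous_const
      simpa using this.tendsto y
    have hq : Tendsto (fun x => ((ρ + dist x y) / ρ) ^ 2) (𝓝 y) (𝓝 1) := by
      have := ((hd.const_add ρ).div_const ρ).pow 2
      simpa [hρ.ne'] using this
    have hup : Tendsto (fun x => ((ρ + dist x y) / ρ) ^ 2 * (u y + M) - M) (𝓝 y) (𝓝 (u y)) := by
      simpa using (hq.mul_const (u y + M)).sub_const M
    have hlo : Tendsto (fun x => (((ρ + dist x y) / ρ) ^ 2)⁻¹ * (u y + M) - M) (𝓝 y)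
        (𝓝 (u y)) := by
      simpa using ((hq.inv₀ one_ne_zero).mul_const (u y + M)).sub_const M
    have hball : ∀ᶠ x in 𝓝 y, x ∈ ball y ρ := ball_mem_nhds y hρ
    refine tendsto_of_tendsto_of_tendsto_of_le_of_le' hlo hup ?_ ?_
    · filter_upwards [hball] with x hx
      rw [mem_ball] at hx
      have := hharn y x ρ (dist x y) hρ (dist_comm x y).ge (by
        refine Set.Subset.trans (fun z hz => ?_) hrU
        rw [mem_closedBall] at hz; rw [mem_ball]
        linarith [dist_triangle z x y])
      have hp : 0 < ((ρ + dist x y) / ρ) ^ 2 := by positivity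
      rw [sub_le_iff_le_add, inv_mul_le_iff₀ hp]
      exact this
    · filter_upwards [hball] with x hx
      rw [mem_ball] at hx
      have := hharn x y ρ (dist x y) hρ le_rfl (by
        refine Set.Subset.trans (fun z hz => ?_) hrU
        rw [mem_closedBall] at hz; rw [mem_ball]
        linarith)
      linarith
  refine ⟨u, ?_, ?_, hufr⟩
  · intro ζ hζ
    by_cases hζU : ζ ∈ U
    · exact (hucont.continuousAt (hU.mem_nhds hζU)).continuousWithinAt
    have hζf : ζ ∈ frontier U := by rw [hU.frontier_eq]; exact ⟨hζ, hζU⟩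
    rw [Metric.continuousWithinAt_iff]
    intro ε hε
    obtain ⟨δ, hδ, hδF⟩ := Metric.continuousWithinAt_iff.1 (hFc ζ hζ) (ε / 3) (by positivity)
    have hM0 : 0 ≤ M := (abs_nonneg _).trans (hFM ζ hζ)
    obtain ⟨k, hk⟩ : ∃ k : ℕ, (2 / 3 : ℝ) ^ k * (2 * M) < ε / 3 := by
      have : Tendsto (fun k : ℕ => (2 / 3 : ℝ) ^ k * (2 * M)) atTop (𝓝 0) := by
        simpa using (tendsto_pow_atTop_nhds_zero_of_lt_one (by norm_num : (0 : ℝ) ≤ 2 / 3)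
          (by norm_num)).mul_const (2 * M)
      exact (this.eventually_lt_const (by positivity : 0 < ε / 3)).exists
    -- decay applied to each member of the family, with a rate common to all of them
    have hub : ∀ z ∈ U, z ∈ closedBall ζ (δ / 2 / 100 ^ k) → u z ≤ F ζ + 2 * (ε / 3) := by
      intro z hz hzk
      refine hsup z _ fun v hv => ?_
      have := decay hU hζU (hroot ζ hζf) (v := fun z => v z + -(F ζ + ε / 3))
        (hv.cont.add continuousOn_const)
        (fun z hz => (hv.sub z hz).add (subMV_const _ z) (hU.mem_nhds hz)
          (hv.cont.mono subset_closure) continuousOn_const) (R := δ / 2) (by positivity)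
        (m := 2 * M) (by positivity) (fun ξ hξ hξ' => by
          have h1 := hδF (frontier_subset_closure hξ) (lt_of_le_of_lt hξ' (by linarith))
          rw [Real.dist_eq] at h1
          linarith [hv.bdry ξ hξ, (abs_lt.1 h1).2])
        (fun z hz _ => by
          linarith [hv.le hU hb hFM z (subset_closure hz), (abs_le.1 (hFM ζ hζ)).1]) k z hz hzk
      linarith
    have hk1 : δ / 2 / 100 ^ k ≤ δ / 2 :=
      div_le_self (by positivity) (one_le_pow₀ (by norm_num))
    refine ⟨δ / 2 / 100 ^ k, by positivity, fun {x} hx hxd => ?_⟩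
    have h1 := hδF hx (by linarith)
    rw [Real.dist_eq, abs_lt] at h1
    rw [hufr ζ hζf, Real.dist_eq, abs_lt]
    by_cases hxU : x ∈ U
    · constructor
      · linarith [hle F hF x hx]
      · linarith [hub x hxU hxd.le]
    · rw [hufr x (by rw [hU.frontier_eq]; exact ⟨hx, hxU⟩)]
      constructor <;> linarith
  · intro z hz r hr hs
    refine avg_eq_of_approx hr (hucont.mono hs) fun ε hε => ?_
    -- by compactness one member of the family is uniformly close to the supremum on the disc
    have hdini : ∃ v, PerronClass U F M v ∧ ∀ x ∈ closedBall z r, u x - ε < v x := by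
      have hK := isCompact_closedBall z r
      refine hK.induction_on (p := fun s => ∃ v, PerronClass U F M v ∧ ∀ x ∈ s, u x - ε < v x)
        ⟨F, hF, by simp⟩ (fun s t hst ⟨v, hv, h⟩ => ⟨v, hv, fun x hx => h x (hst hx)⟩) ?_ ?_
      · rintro s t ⟨v, hv, h⟩ ⟨v', hv', h'⟩
        refine ⟨_, hv.max hU hv', ?_⟩
        rintro x (hx | hx)
        · exact (h x hx).trans_le (le_max_left _ _)
        · exact (h' x hx).trans_le (le_max_right _ _)
      · intro x hx
        obtain ⟨v, hv, hvx⟩ := hnear x (subset_closure (hs hx)) ε hε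
        have hca : ContinuousAt (fun x => u x - ε - v x) x :=
          ((hucont.continuousAt (hU.mem_nhds (hs hx))).sub continuousAt_const).sub
            ((hv.cont.mono subset_closure).continuousAt (hU.mem_nhds (hs hx)))
        refine ⟨{x | u x - ε < v x}, mem_nhdsWithin_of_mem_nhds ?_, v, hv, fun x hx => hx⟩
        have := hca.eventually_lt_const (show u x - ε - v x < 0 by linarith)
        filter_upwards [this] with y hy
        linarith
    obtain ⟨v, hv, hvu⟩ := hdini
    obtain ⟨v', hv', hvv, hm⟩ := hv.modify hU hr hs
    refine ⟨v', hv'.cont.mono (hs.trans subset_closure), fun x hx => ?_,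
      hm z (mem_closedBall_self hr.le) r hr subset_rfl⟩
    have h1 := hvu x hx
    have h2 := hvv x (subset_closure (hs hx))
    have h3 := hle v' hv' x (subset_closure (hs hx))
    rw [abs_le]; constructor <;> linarith

/-! ### The Dirichlet problem for continuous data on bounded sets -/

/-- Differences of continuous subharmonic functions form a lattice which separates points, so by
the lattice form of Stone-Weierstrass they approximate every continuous function on a compact
set. -/
lemma exists_subharmonic_diff {X : Set ℂ} (hX : IsCompact X) {f : ℂ → ℝ} (hf : ContinuousOn f X)
    {ε : ℝ} (hε : 0 < ε) :
    ∃ F G : ℂ → ℝ, Continuous F ∧ Continuous G ∧ (∀ z, SubMV F z) ∧ (∀ z, SubMV G z) ∧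
      ∀ x ∈ X, |f x - (F x - G x)| ≤ ε := by
  have : CompactSpace X := isCompact_iff_compactSpace.1 hX
  let L : Set C(X, ℝ) := {φ | ∃ F G : ℂ → ℝ, Continuous F ∧ Continuous G ∧ (∀ z, SubMV F z) ∧
    (∀ z, SubMV G z) ∧ ∀ x : X, φ x = F x - G x}
  have hadd : ∀ F G : ℂ → ℝ, Continuous F → Continuous G → (∀ z, SubMV F z) → (∀ z, SubMV G z) →
      ∀ z, SubMV (fun x => F x + G x) z := fun F G hF hG hF' hG' z =>
    (hF' z).add (hG' z) univ_mem hF.continuousOn hG.continuousOn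
  have hmax : ∀ F G : ℂ → ℝ, Continuous F → Continuous G → (∀ z, SubMV F z) → (∀ z, SubMV G z) →
      ∀ z, SubMV (fun x => max (F x) (G x)) z := fun F G hF hG hF' hG' z =>
    (hF' z).sup (hG' z) univ_mem hF.continuousOn hG.continuousOn
  have htop : closure L = ⊤ := by
    refine ContinuousMap.sublattice_closure_eq_top L ?_ ?_ ?_ ?_
    · exact ⟨0, fun _ => 0, fun _ => 0, continuous_const, continuous_const, subMV_const 0,
        subMV_const 0, fun x => by simp⟩
    -- `min (F₁ - G₁) (F₂ - G₂) = (F₁ + F₂) - max (F₁ + G₂) (F₂ + G₁)`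
    · rintro φ ⟨F₁, G₁, a₁, b₁, c₁, d₁, e₁⟩ ψ ⟨F₂, G₂, a₂, b₂, c₂, d₂, e₂⟩
      refine ⟨fun x => F₁ x + F₂ x, fun x => max (F₂ x + G₁ x) (F₁ x + G₂ x), a₁.add a₂,
        (a₂.add b₁).max (a₁.add b₂), hadd _ _ a₁ a₂ c₁ c₂,
        hmax _ _ (a₂.add b₁) (a₁.add b₂) (hadd _ _ a₂ b₁ c₂ d₁) (hadd _ _ a₁ b₂ c₁ d₂),
        fun x => ?_⟩
      rw [ContinuousMap.inf_apply, e₁, e₂]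
      beta_reduce
      rcases le_total (F₁ x - G₁ x) (F₂ x - G₂ x) with h | h
      · rw [inf_eq_left.2 h, max_eq_left (by linarith)]; ring
      · rw [inf_eq_right.2 h, max_eq_right (by linarith)]; ring
    · rintro φ ⟨F₁, G₁, a₁, b₁, c₁, d₁, e₁⟩ ψ ⟨F₂, G₂, a₂, b₂, c₂, d₂, e₂⟩
      refine ⟨fun x => max (F₁ x + G₂ x) (F₂ x + G₁ x), fun x => G₁ x + G₂ x,
        (a₁.add b₂).max (a₂.add b₁), b₁.add b₂,
        hmax _ _ (a₁.add b₂) (a₂.add b₁) (hadd _ _ a₁ b₂ c₁ d₂) (hadd _ _ a₂ b₁ c₂ d₁),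
        hadd _ _ b₁ b₂ d₁ d₂, fun x => ?_⟩
      rw [ContinuousMap.sup_apply, e₁, e₂]
      beta_reduce
      rcases le_total (F₁ x - G₁ x) (F₂ x - G₂ x) with h | h
      · rw [sup_eq_right.2 h, max_eq_right (by linarith)]; ring
      · rw [sup_eq_left.2 h, max_eq_left (by linarith)]; ring
    · intro v x y
      let p : ℂ → ℂ := fun z => (v x : ℂ) + (v y - v x : ℝ) * ((z - x) / (y - x))
      have hp : Differentiable ℂ p := by fun_prop
      have hpc : Continuous fun z => (p z).re := Complex.continuous_re.comp hp.continuous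
      have hps : ∀ z, SubMV (fun z => (p z).re) z := fun z =>
        (hasMVP_re (hp.differentiableOn (s := Set.univ))).subMV isOpen_univ trivial
      refine ⟨⟨fun z => (p z).re, hpc.comp continuous_subtype_val⟩,
        ⟨fun z => (p z).re, fun _ => 0, hpc, continuous_const, hps, subMV_const 0,
          fun x => by simp⟩, by simp [p], ?_⟩
      by_cases hxy : x = y
      · subst hxy; simp [p]
      · have : (y : ℂ) - x ≠ 0 := sub_ne_zero.2 fun h => hxy (Subtype.ext h.symm)
        have h2 : p y = (v y : ℂ) := by
          simp only [p]; rw [div_self this]; push_cast; ring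
        change (p y).re = v y
        rw [h2, Complex.ofReal_re]
  let fX : C(X, ℝ) := ⟨X.domRestrict f, hf.domRestrict⟩
  have hfX : fX ∈ closure L := by rw [htop]; trivial
  obtain ⟨φ, ⟨F, G, a, b, c, d, e⟩, hφ⟩ := Metric.mem_closure_iff.1 hfX ε hε
  refine ⟨F, G, a, b, c, d, fun x hx => ?_⟩
  have := (ContinuousMap.dist_apply_le_dist (f := fX) (g := φ) ⟨x, hx⟩).trans hφ.le
  rw [Real.dist_eq, e] at this
  exact this

/-- The Dirichlet problem on a bounded open set carrying square roots at its boundary points. -/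
theorem dirichlet_bounded {U : Set ℂ} (hU : IsOpen U) (hb : Bornology.IsBounded U)
    (hroot : ∀ a ∈ frontier U, HasRoot U a) {f : ℂ → ℝ} (hf : ContinuousOn f (frontier U)) :
    ∃ h : ℂ → ℝ, ContinuousOn h (closure U) ∧ HasMVP h U ∧ ∀ ζ ∈ frontier U, h ζ = f ζ := by
  have hX : IsCompact (frontier U) := hb.isCompact_closure.of_isClosed_subset isClosed_frontier
    frontier_subset_closure
  have h0 : ∀ n : ℕ, (0 : ℝ) < 1 / (n + 1) := fun n => Nat.one_div_pos_of_nat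
  have hstep : ∀ n : ℕ, ∃ h : ℂ → ℝ, ContinuousOn h (closure U) ∧ HasMVP h U ∧
      ∀ ζ ∈ frontier U, |f ζ - h ζ| ≤ 1 / ((n : ℝ) + 1) := by
    intro n
    obtain ⟨F, G, hF, hG, hFs, hGs, hFG⟩ := exists_subharmonic_diff hX hf (h0 n)
    obtain ⟨p, hpc, hpm, hpF⟩ := perron hU hb hroot hF.continuousOn fun z _ => hFs z
    obtain ⟨q, hqc, hqm, hqG⟩ := perron hU hb hroot hG.continuousOn fun z _ => hGs z
    refine ⟨fun x => p x - q x, hpc.sub hqc,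
      hpm.sub hqm (hpc.mono subset_closure) (hqc.mono subset_closure), fun ζ hζ => ?_⟩
    beta_reduce
    rw [hpF ζ hζ, hqG ζ hζ]
    exact hFG ζ hζ
  choose u huc hum huf using hstep
  have hb0 : Tendsto (fun n : ℕ => 2 * (1 / ((n : ℝ) + 1))) atTop (𝓝 0) := by
    simpa using tendsto_one_div_add_atTop_nhds_zero_nat.const_mul (2 : ℝ)
  obtain ⟨H, hH⟩ := exists_limit_of_rate (S := closure U) u hb0 (by
    intro n m hnm
    refine abs_sub_le_of_frontier hU hb (huc n) (huc m) (hum n) (hum m) fun ζ hζ => ?_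
    have h1 := huf n ζ hζ
    have h2 := (huf m ζ hζ).trans (one_div_le_one_div_of_le (by positivity)
      (by exact_mod_cast Nat.succ_le_succ hnm : (n : ℝ) + 1 ≤ m + 1))
    rw [abs_le] at h1 h2 ⊢
    constructor <;> linarith)
  have hex : ∀ ε > 0, ∃ n : ℕ, 2 * (1 / ((n : ℝ) + 1)) < ε := fun ε hε =>
    (hb0.eventually_lt_const hε).exists
  refine ⟨H, continuousOn_of_approx fun ε hε => ?_, hasMVP_of_approx fun z r hs ε hε => ?_,
    fun ζ hζ => ?_⟩
  · obtain ⟨n, hn⟩ := hex ε hε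
    exact ⟨u n, huc n, fun x hx => (hH n x hx).trans hn.le⟩
  · obtain ⟨n, hn⟩ := hex ε hε
    exact ⟨u n, (huc n).mono subset_closure, hum n, fun x hx =>
      (hH n x (subset_closure (hs hx))).trans hn.le⟩
  · have h1 : Tendsto (fun n => u n ζ) atTop (𝓝 (H ζ)) := by
      refine tendsto_iff_dist_tendsto_zero.2 (squeeze_zero (fun _ => dist_nonneg) (fun n => ?_) hb0)
      rw [dist_comm, Real.dist_eq]
      exact hH n ζ (frontier_subset_closure hζ)
    have h2 : Tendsto (fun n => u n ζ) atTop (𝓝 (f ζ)) := by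
      refine tendsto_iff_dist_tendsto_zero.2 (squeeze_zero (fun _ => dist_nonneg) (fun n => ?_)
        tendsto_one_div_add_atTop_nhds_zero_nat)
      rw [dist_comm, Real.dist_eq]
      exact huf n ζ hζ
    exact tendsto_nhds_unique h1 h2

/-! ### Unbounded domains and consequences of the decay estimate -/

lemma hasRoot_of_simplyConnected {U : Set ℂ} (hU : IsOpen U) (hs : SimplyConnectedSpace U) {b : ℂ}
    (hb : b ∉ U) : HasRoot U b := by
  have h : IsSimplyConnected U := hs
  obtain ⟨σ, hσ, hσ2⟩ := Complex.exists_continuousOn_pow_eq h hU (g := fun z => z - b)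
    (by fun_prop) (by
      rintro ⟨z, hz, hz0⟩
      exact hb (sub_eq_zero.1 hz0 ▸ hz)) (n := 2) two_ne_zero
  exact ⟨σ, hσ, fun z _ => hσ2 z⟩

lemma hasRoot_ball {a b : ℂ} {R : ℝ} (hR : 0 < R) (hb : b ∉ ball a R) : HasRoot (ball a R) b := by
  refine hasRoot_of_simplyConnected isOpen_ball ?_ hb
  have := (convex_ball a R).contractibleSpace (nonempty_ball.2 hR)
  infer_instance

/-- The bounded Dirichlet problem with global data, the solution being extended by the data. -/
lemma dirichlet_bounded_global {U : Set ℂ} (hU : IsOpen U) (hb : Bornology.IsBounded U)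
    (hroot : ∀ a ∈ frontier U, HasRoot U a) {f : ℂ → ℝ} (hf : Continuous f) {M : ℝ}
    (hM : ∀ z, |f z| ≤ M) :
    ∃ h : ℂ → ℝ, Continuous h ∧ HasMVP h U ∧ (∀ z ∉ U, h z = f z) ∧ ∀ z, |h z| ≤ M := by
  classical
  obtain ⟨h, hc, hm, hfr⟩ := dirichlet_bounded hU hb hroot hf.continuousOn
  set u : ℂ → ℝ := fun z => if z ∈ U then h z else f z with hu
  have e1 : ∀ z ∉ U, u z = f z := fun z hz => if_neg hz
  have e2 : ∀ z ∈ closure U, u z = h z := by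
    intro z hz
    by_cases hzU : z ∈ U
    · exact if_pos hzU
    · rw [e1 z hzU, hfr z (by rw [hU.frontier_eq]; exact ⟨hz, hzU⟩)]
  have hbd := abs_sub_le_of_frontier hU hb (g := fun _ => 0) (ε := M) hc continuousOn_const hm
    (hasMVP_const 0 U) fun ζ hζ => by rw [hfr ζ hζ, sub_zero]; exact hM ζ
  refine ⟨u, ?_, fun z hz r hr hs => ?_, e1, fun z => ?_⟩
  · have := (hc.congr e2).union_of_isClosed (hf.continuousOn.congr fun z (hz : z ∈ Uᶜ) => e1 z hz)
      isClosed_closure hU.isClosed_compl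
    rw [← continuousOn_univ]
    refine this.mono fun z _ => ?_
    by_cases hzU : z ∈ U
    · exact Or.inl (subset_closure hzU)
    · exact Or.inr hzU
  · rw [e2 z (subset_closure hz), hm z hz r hr hs]
    exact avg_congr fun x hx => (e2 x (subset_closure (hs (ball_subset_closedBall hx)))).symm
  · by_cases hzU : z ∈ U
    · rw [e2 z (subset_closure hzU)]
      simpa using hbd z (subset_closure hzU)
    · rw [e1 z hzU]; exact hM z

/-- The Dirichlet problem on a possibly unbounded set with bounded data, solved by exhaustion with
discs. The decay estimate around a point outside the set, used at large scales, shows that the solutions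
on the exhausting sets form a locally uniformly Cauchy sequence. -/
theorem dirichlet {Ω : Set ℂ} (hΩ : IsOpen Ω) (hne : Ωᶜ.Nonempty)
    (hroot : ∀ b ∉ Ω, HasRoot Ω b) {f : ℂ → ℝ} (hf : Continuous f) {M : ℝ}
    (hM : ∀ z, |f z| ≤ M) :
    ∃ h : ℂ → ℝ, Continuous h ∧ HasMVP h Ω ∧ (∀ z ∉ Ω, h z = f z) ∧ ∀ z, |h z| ≤ M := by
  obtain ⟨a, ha⟩ := hne
  have hM0 : 0 ≤ M := (abs_nonneg _).trans (hM 0)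
  have hRpos : ∀ k : ℕ, (0 : ℝ) < 100 ^ k := fun k => by positivity
  set U : ℕ → Set ℂ := fun k => Ω ∩ ball a (100 ^ (k + 1)) with hUdef
  have hUo : ∀ k, IsOpen (U k) := fun k => hΩ.inter isOpen_ball
  have hsol : ∀ k, ∃ h : ℂ → ℝ, Continuous h ∧ HasMVP h (U k) ∧ (∀ z ∉ U k, h z = f z) ∧
      ∀ z, |h z| ≤ M := by
    intro k
    refine dirichlet_bounded_global (hUo k) (isBounded_ball.subset Set.inter_subset_right)
      (fun b hb => ?_) hf hM
    rw [(hUo k).frontier_eq] at hb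
    by_cases hbΩ : b ∈ Ω
    · exact (hasRoot_ball (hRpos (k + 1)) fun h => hb.2 ⟨hbΩ, h⟩).mono Set.inter_subset_right
    · exact (hroot b hbΩ).mono Set.inter_subset_left
  choose u huc hum huf huM using hsol
  have hone : ∀ k j : ℕ, ∀ s t : ℂ → ℝ, Continuous s → Continuous t → HasMVP s (U k) →
      HasMVP t (U k) → (∀ z ∉ Ω, s z = t z) → (∀ z, |s z| ≤ M) → (∀ z, |t z| ≤ M) →
      ∀ z ∈ U k, z ∈ closedBall a (100 ^ k / 100 ^ j) → s z - t z ≤ (2 / 3) ^ j * (2 * M) := by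
    intro k j s t hs ht hsm htm hst hsM htM
    refine decay (hUo k) (fun h => ha h.1) ((hroot a ha).mono Set.inter_subset_left)
      (v := fun z => s z - t z) (hs.sub ht).continuousOn
      (fun z hz => (hsm.sub htm hs.continuousOn ht.continuousOn).subMV (hUo k) hz) (hRpos k)
      (by positivity) (fun ζ hζ hζR => ?_) (fun z _ _ => ?_) j
    · rw [(hUo k).frontier_eq] at hζ
      have hζΩ : ζ ∉ Ω := fun h => hζ.2 ⟨h, by
        rw [mem_closedBall] at hζR; rw [mem_ball]
        exact hζR.trans_lt (pow_lt_pow_right₀ (by norm_num) (Nat.lt_succ_self k))⟩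
      rw [hst ζ hζΩ, sub_self]
    · linarith [(abs_le.1 (hsM z)).2, (abs_le.1 (htM z)).1]
  have hrate : ∀ l n m : ℕ, n ≤ m → ∀ z ∈ closedBall a (100 ^ l : ℝ),
      |u (n + l) z - u (m + l) z| ≤ (2 / 3) ^ n * (2 * M) := by
    intro l n m hnm z hz
    have hsubU : U (n + l) ⊆ U (m + l) := Set.inter_subset_inter_right _
      (ball_subset_ball (pow_le_pow_right₀ (by norm_num) (by omega)))
    have hm' := (hum (m + l)).mono hsubU
    have hoff : ∀ k, ∀ z ∉ Ω, u k z = f z := fun k z hz => huf k z fun h => hz h.1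
    by_cases hzΩ : z ∈ Ω
    · have hz' : z ∈ closedBall a (100 ^ (n + l) / 100 ^ n : ℝ) := by
        rwa [pow_add, mul_div_cancel_left₀ _ (hRpos n).ne']
      have hzU : z ∈ U (n + l) := ⟨hzΩ, by
        rw [mem_closedBall] at hz; rw [mem_ball]
        exact hz.trans_lt (pow_lt_pow_right₀ (by norm_num) (by omega))⟩
      have h1 := hone (n + l) n _ _ (huc _) (huc _) (hum _) hm'
        (fun z hz => by rw [hoff _ z hz, hoff _ z hz]) (huM _) (huM _) z hzU hz'
      have h2 := hone (n + l) n _ _ (huc _) (huc _) hm' (hum _)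
        (fun z hz => by rw [hoff _ z hz, hoff _ z hz]) (huM _) (huM _) z hzU hz'
      rw [abs_le]; constructor <;> linarith
    · rw [hoff _ z hzΩ, hoff _ z hzΩ, sub_self, abs_zero]; positivity
  have hb0 : Tendsto (fun n : ℕ => (2 / 3 : ℝ) ^ n * (2 * M)) atTop (𝓝 0) := by
    simpa using (tendsto_pow_atTop_nhds_zero_of_lt_one (by norm_num : (0 : ℝ) ≤ 2 / 3)
      (by norm_num)).mul_const (2 * M)
  have hloc : ∀ l : ℕ, ∃ H : ℂ → ℝ, ∀ n, ∀ z ∈ closedBall a (100 ^ l : ℝ),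
      |H z - u (n + l) z| ≤ (2 / 3) ^ n * (2 * M) := fun l =>
    exists_limit_of_rate (fun n => u (n + l)) hb0 (hrate l)
  choose G hG using hloc
  have hGlim : ∀ l, ∀ z ∈ closedBall a (100 ^ l : ℝ), Tendsto (fun n => u n z) atTop (𝓝 (G l z)) := by
    intro l z hz
    rw [← tendsto_add_atTop_iff_nat l]
    refine tendsto_iff_dist_tendsto_zero.2 (squeeze_zero (fun _ => dist_nonneg) (fun n => ?_) hb0)
    rw [dist_comm, Real.dist_eq]
    exact hG l n z hz
  have hbig : ∀ r : ℝ, ∃ l : ℕ, r < 100 ^ l := fun r => pow_unbounded_of_one_lt r (by norm_num)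
  have hin : ∀ z : ℂ, ∃ l : ℕ, z ∈ ball a (100 ^ l : ℝ) := fun z => hbig (dist z a)
  choose l hl using hin
  set H : ℂ → ℝ := fun z => G (l z) z with hH
  have hHlim : ∀ z, Tendsto (fun n => u n z) atTop (𝓝 (H z)) := fun z =>
    hGlim (l z) z (ball_subset_closedBall (hl z))
  have hHG : ∀ k, ∀ z ∈ closedBall a (100 ^ k : ℝ), H z = G k z := fun k z hz =>
    tendsto_nhds_unique (hHlim z) (hGlim k z hz)
  have happ : ∀ k, ∀ ε > 0, ∃ n, ∀ z ∈ closedBall a (100 ^ k : ℝ), |H z - u (n + k) z| ≤ ε := by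
    intro k ε hε
    obtain ⟨n, hn⟩ := (hb0.eventually_lt_const hε).exists
    exact ⟨n, fun z hz => by rw [hHG k z hz]; exact (hG k n z hz).trans hn.le⟩
  have hHc : Continuous H := by
    refine continuous_iff_continuousAt.2 fun z => ?_
    have : ContinuousOn H (closedBall a (100 ^ (l z))) := continuousOn_of_approx fun ε hε => by
      obtain ⟨n, hn⟩ := happ (l z) ε hε
      exact ⟨_, (huc (n + l z)).continuousOn, hn⟩
    exact (this.mono ball_subset_closedBall).continuousAt (isOpen_ball.mem_nhds (hl z))
  refine ⟨H, hHc, fun z hz r hr hs => ?_, fun z hz => ?_, fun z => ?_⟩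
  · refine avg_eq_of_approx hr hHc.continuousOn fun ε hε => ?_
    obtain ⟨k, hk⟩ := hbig (r + dist z a)
    have hzk : closedBall z r ⊆ closedBall a (100 ^ k) := closedBall_subset_closedBall' hk.le
    obtain ⟨n, hn⟩ := happ k ε hε
    refine ⟨u (n + k), (huc _).continuousOn, fun x hx => hn x (hzk hx), ?_⟩
    have hsU : closedBall z r ⊆ U (n + k) := fun x hx => ⟨hs hx, by
      have := hzk hx
      rw [mem_closedBall] at this; rw [mem_ball]
      exact this.trans_lt (pow_lt_pow_right₀ (by norm_num) (by omega))⟩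
    exact hum (n + k) z (hsU (mem_closedBall_self hr.le)) r hr hsU
  · refine tendsto_nhds_unique (hHlim z) ?_
    have : (fun n => u n z) = fun _ => f z := funext fun n => huf n z fun h => hz h.1
    rw [this]; exact tendsto_const_nhds
  · exact le_of_tendsto' (hHlim z).abs fun n => huM n z

/-- The modulus of continuity of a bounded harmonic function at the boundary is controlled by the
modulus of continuity of its boundary values, independently of the domain. -/
lemma boundary_estimate {Ω : Set ℂ} (hΩ : IsOpen Ω) {y : ℂ} (hy : y ∉ Ω) (hroot : HasRoot Ω y)
    {f h : ℂ → ℝ} {M : ℝ} (hhc : Continuous h) (hhm : HasMVP h Ω) (hhf : ∀ z ∉ Ω, h z = f z)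
    (hhM : ∀ z, |h z| ≤ M) {R η : ℝ} (hR : 0 < R) (hη : 0 ≤ η)
    (hfη : ∀ ζ ∈ closedBall y R, |f ζ - f y| ≤ η) (k : ℕ) :
    ∀ z ∈ Ω, z ∈ closedBall y (R / 100 ^ k) → |h z - f y| ≤ η + (2 / 3) ^ k * (2 * M) := by
  have hM0 : 0 ≤ M := (abs_nonneg _).trans (hhM 0)
  have hyM : |f y| ≤ M := by rw [← hhf y hy]; exact hhM y
  have hcst : ∀ c : ℝ, Continuous fun _ : ℂ => c := fun c => continuous_const
  intro z hz hzR
  have h1 := decay hΩ hy hroot (v := fun z => h z - (f y + η)) (hhc.sub (hcst _)).continuousOn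
    (fun z hz => (hhm.sub (hasMVP_const _ Ω) hhc.continuousOn continuousOn_const).subMV hΩ hz)
    hR (m := 2 * M) (by positivity) (fun ζ hζ hζR => by
      rw [hΩ.frontier_eq] at hζ
      rw [hhf ζ hζ.2]
      linarith [(abs_le.1 (hfη ζ hζR)).2])
    (fun z _ _ => by linarith [(abs_le.1 (hhM z)).2, (abs_le.1 hyM).1]) k z hz hzR
  have h2 := decay hΩ hy hroot (v := fun z => (f y - η) - h z) ((hcst _).sub hhc).continuousOn
    (fun z hz => ((hasMVP_const _ Ω).sub hhm continuousOn_const hhc.continuousOn).subMV hΩ hz)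
    hR (m := 2 * M) (by positivity) (fun ζ hζ hζR => by
      rw [hΩ.frontier_eq] at hζ
      rw [hhf ζ hζ.2]
      linarith [(abs_le.1 (hfη ζ hζR)).1])
    (fun z _ _ => by linarith [(abs_le.1 (hhM z)).1, (abs_le.1 hyM).2]) k z hz hzR
  rw [abs_le]; constructor <;> linarith

/-- A Phragmén–Lindelöf principle: on a possibly unbounded open set carrying a square root at some
omitted point, bounded harmonic functions obey the maximum principle with no condition at
infinity. -/
lemma phragmen_lindelof {U : Set ℂ} (hU : IsOpen U) {a : ℂ} (ha : a ∉ U) (hroot : HasRoot U a)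
    {p q : ℂ → ℝ} (hpc : Continuous p) (hqc : Continuous q) (hp : HasMVP p U) (hq : HasMVP q U)
    {M η : ℝ} (hη : 0 ≤ η) (hpM : ∀ z, |p z| ≤ M) (hqM : ∀ z, |q z| ≤ M)
    (hfr : ∀ ζ ∈ frontier U, |p ζ - q ζ| ≤ η) : ∀ z ∈ U, |p z - q z| ≤ η := by
  have hM0 : 0 ≤ M := (abs_nonneg _).trans (hpM 0)
  have key : ∀ p q : ℂ → ℝ, Continuous p → Continuous q → HasMVP p U → HasMVP q U →
      (∀ z, |p z| ≤ M) → (∀ z, |q z| ≤ M) → (∀ ζ ∈ frontier U, p ζ - q ζ ≤ η) →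
      ∀ z ∈ U, p z - q z ≤ η := by
    intro p q hpc hqc hp hq hpM hqM hfr z hz
    have hlim : Tendsto (fun k : ℕ => η + (2 / 3 : ℝ) ^ k * (2 * M)) atTop (𝓝 η) := by
      simpa using ((tendsto_pow_atTop_nhds_zero_of_lt_one (by norm_num : (0 : ℝ) ≤ 2 / 3)
        (by norm_num)).mul_const (2 * M)).const_add η
    refine ge_of_tendsto' hlim fun k => ?_
    -- `k` steps of decay starting from a disc of radius proportional to `100 ^ k`
    have := decay hU ha hroot (v := fun z => p z - q z - η)
      ((hpc.sub hqc).sub continuous_const).continuousOn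
      (fun z hz => ((hp.sub hq hpc.continuousOn hqc.continuousOn).sub (hasMVP_const η U)
        (hpc.sub hqc).continuousOn continuousOn_const).subMV hU hz)
      (R := 100 ^ k * (dist z a + 1)) (by positivity) (m := 2 * M) (by positivity)
      (fun ζ hζ _ => by linarith [hfr ζ hζ])
      (fun z _ _ => by linarith [(abs_le.1 (hpM z)).2, (abs_le.1 (hqM z)).1]) k z hz (by
        rw [mul_div_cancel_left₀ _ (by positivity), mem_closedBall]
        linarith)
    linarith
  intro z hz
  have h1 := key p q hpc hqc hp hq hpM hqM (fun ζ hζ => (abs_le.1 (hfr ζ hζ)).2) z hz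
  have h2 := key q p hqc hpc hq hp hqM hpM
    (fun ζ hζ => by linarith [(abs_le.1 (hfr ζ hζ)).1]) z hz
  rw [abs_le]; constructor <;> linarith

/-! ### Convergence of harmonic measures -/

/-- A bounded harmonic function with boundary values `f` computes the integral of `f` against
harmonic measure. -/
lemma IsHarmonicMeasure.integral_eq {Ω : Set ℂ} {w : ℂ} {μ : Measure ℂ}
    (hμ : IsHarmonicMeasure Ω w μ) (hΩ : IsOpen Ω) {f h : ℂ → ℝ} {M : ℝ} (hc : Continuous h) (hm : HasMVP h Ω)
    (hhf : ∀ z ∉ Ω, h z = f z) (hM : ∀ z, |h z| ≤ M) : ∫ x, f x ∂μ = h w := by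
  rw [hμ.2.2 h hc.continuousOn ⟨M, hM⟩ hm]
  refine integral_congr_ae ?_
  have : frontier Ω ∈ ae μ := mem_ae_iff.2 hμ.2.1
  filter_upwards [this] with x hx
  rw [hΩ.frontier_eq] at hx
  exact (hhf x hx.2).symm

/-- Convergence of the integrals of bounded Lipschitz functions. -/
lemma tendsto_integral_of_lipschitz
    (Ω : ℕ → Set ℂ) (w : ℕ → ℂ) (Ωl : Set ℂ) (wl : ℂ)
    (hopen : ∀ n, IsOpen (Ω n)) (hroot : ∀ n, ∀ b ∉ Ω n, HasRoot (Ω n) b)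
    (hhyp : ∀ n, (Ω n)ᶜ.Nonempty)
    (hopenl : IsOpen Ωl) (hrootl : ∀ b ∉ Ωl, HasRoot Ωl b)
    (hhypl : Ωlᶜ.Nonempty) (hwl : wl ∈ Ωl)
    (μ : ℕ → Measure ℂ) (ν : Measure ℂ)
    (hμ : ∀ n, IsHarmonicMeasure (Ω n) (w n) (μ n))
    (hν : IsHarmonicMeasure Ωl wl ν)
    (h : CommonInteriorApprox Ω w Ωl wl)
    (f : ℂ → ℝ) {M : ℝ} (hM : ∀ z, |f z| ≤ M) {L : NNReal} (hL : LipschitzWith L f) :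
    Tendsto (fun n => ∫ x, f x ∂(μ n)) atTop (𝓝 (∫ x, f x ∂ν)) := by
  have hf : Continuous f := hL.continuous
  have hM0 : 0 ≤ M := (abs_nonneg _).trans (hM 0)
  choose u huc hum huf huM using fun n => dirichlet (hopen n) (hhyp n) (hroot n) hf hM
  obtain ⟨q, hqc, hqm, hqf, hqM⟩ := dirichlet hopenl hhypl hrootl hf hM
  simp_rw [fun n => (hμ n).integral_eq (hopen n) (huc n) (hum n) (huf n) (huM n)]
  rw [hν.integral_eq hopenl hqc hqm hqf hqM]
  have hfr : ∀ {W : Set ℂ}, Wᶜ.Nonempty → W.Nonempty → (frontier W).Nonempty := by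
    intro W h1 h2
    rw [nonempty_frontier_iff]
    exact ⟨h2, fun h => by simp [h] at h1⟩
  rw [Metric.tendsto_atTop]
  intro ε₀ hε₀
  set ε := ε₀ / 8 with hε
  have hεpos : 0 < ε := by positivity
  set R : ℝ := ε / (L + 1) with hRdef
  have hR : 0 < R := by positivity
  have hLR : L * R ≤ ε := by
    rw [hRdef, ← mul_div_assoc, div_le_iff₀ (by positivity)]
    nlinarith [L.coe_nonneg]
  have hlip : ∀ x y : ℂ, dist x y ≤ R → |f x - f y| ≤ ε := by
    intro x y hxy
    rw [← Real.dist_eq]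
    exact (hL.dist_le_mul x y).trans ((mul_le_mul_of_nonneg_left hxy L.coe_nonneg).trans hLR)
  obtain ⟨k, hk⟩ : ∃ k : ℕ, (2 / 3 : ℝ) ^ k * (2 * M) < ε := by
    have : Tendsto (fun k : ℕ => (2 / 3 : ℝ) ^ k * (2 * M)) atTop (𝓝 0) := by
      simpa using (tendsto_pow_atTop_nhds_zero_of_lt_one (by norm_num : (0 : ℝ) ≤ 2 / 3)
        (by norm_num)).mul_const (2 * M)
    exact (this.eventually_lt_const hεpos).exists
  have hδR : R / 100 ^ k ≤ R := div_le_self hR.le (one_le_pow₀ (by norm_num))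
  -- closeness of harmonic extensions to `f` near the boundary, at a scale independent of the domain
  have hclose : ∀ {W : Set ℂ}, IsOpen W → Wᶜ.Nonempty → (∀ b ∉ W, HasRoot W b) → ∀ {p : ℂ → ℝ},
      Continuous p → HasMVP p W → (∀ z ∉ W, p z = f z) → (∀ z, |p z| ≤ M) →
      ∀ z ∈ W, infDist z (frontier W) < R / 100 ^ k → |p z - f z| ≤ 3 * ε := by
    intro W hW hne hr p hpc hpm hpf hpM z hz hd
    obtain ⟨y, hy, hyd⟩ := (infDist_lt_iff (hfr hne ⟨z, hz⟩)).1 hd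
    rw [hW.frontier_eq] at hy
    have h1 := boundary_estimate hW hy.2 (hr y hy.2) hpc hpm hpf hpM hR hεpos.le
      (fun ζ hζ => hlip ζ y hζ) k z hz hyd.le
    have h2 := hlip z y (hyd.le.trans hδR)
    rw [abs_le] at h1 h2 ⊢
    constructor <;> linarith
  have hwlfr : 0 < infDist wl (frontier Ωl) := by
    rw [← isClosed_frontier.notMem_iff_infDist_pos (hfr hhypl ⟨wl, hwl⟩), hopenl.frontier_eq]
    exact fun h => h.2 hwl
  obtain ⟨hwlim, happ⟩ := h
  -- an accuracy below the distance from `wl` to `∂Ωl` forces `wl` into the interior of `K`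
  obtain ⟨N, K, hKc, -, hwK, hKl, hKn, hKfr⟩ :=
    happ (min (R / 100 ^ k) (infDist wl (frontier Ωl))) (lt_min (by positivity) hwlfr)
  have hwint : wl ∈ interior K := by
    by_contra hcon
    have := (hKfr wl (by rw [hKc.frontier_eq]; exact ⟨hwK, hcon⟩)).1
    exact absurd (this.trans_le (min_le_right _ _)) (lt_irrefl _)
  obtain ⟨a, ha⟩ := hhypl
  have hcomp : ∀ n, N ≤ n → ∀ z ∈ interior K, |u n z - q z| ≤ 6 * ε := by
    intro n hn
    refine phragmen_lindelof isOpen_interior (fun h => ha (hKl (interior_subset h)))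
      ((hrootl a ha).mono (interior_subset.trans hKl)) (huc n) hqc
      ((hum n).mono (interior_subset.trans (hKn n hn))) (hqm.mono (interior_subset.trans hKl))
      (by positivity) (huM n) hqM fun ζ hζ => ?_
    have hζK : ζ ∈ frontier K := frontier_interior_subset hζ
    have hζK' : ζ ∈ K := hKc.frontier_subset hζK
    have h1 := hclose (hopen n) (hhyp n) (hroot n) (huc n) (hum n) (huf n) (huM n) ζ (hKn n hn hζK')
      (((hKfr ζ hζK).2 n hn).trans_le (min_le_left _ _))
    have h2 := hclose hopenl ⟨a, ha⟩ hrootl hqc hqm hqf hqM ζ (hKl hζK')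
      ((hKfr ζ hζK).1.trans_le (min_le_left _ _))
    rw [abs_le] at h1 h2 ⊢
    constructor <;> linarith
  have hq : ∀ᶠ n in atTop, dist (q (w n)) (q wl) < ε :=
    ((hqc.tendsto wl).comp hwlim).eventually (ball_mem_nhds _ hεpos)
  have hev : ∀ᶠ n in atTop, w n ∈ interior K :=
    hwlim.eventually (isOpen_interior.mem_nhds hwint)
  obtain ⟨N', hN'⟩ := eventually_atTop.1 (hq.and (hev.and (eventually_ge_atTop N)))
  refine ⟨N', fun n hn => ?_⟩
  obtain ⟨h1, h2, h3⟩ := hN' n hn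
  have h4 := hcomp n h3 (w n) h2
  have h5 := dist_triangle (u n (w n)) (q (w n)) (q wl)
  rw [Real.dist_eq (u n (w n)) (q (w n))] at h5
  linarith

/-- For simply connected hyperbolic domains, arbitrarily good common interior
approximations imply weak convergence of the harmonic measures. -/
theorem interiorApprox_implies_measureConv
    (Ω : ℕ → Set ℂ) (w : ℕ → ℂ) (Ωl : Set ℂ) (wl : ℂ)
    (hopen : ∀ n, IsOpen (Ω n)) (hconn : ∀ n, IsConnected (Ω n))
    (hsc : ∀ n, SimplyConnectedSpace (Ω n))
    (hhyp : ∀ n, (Ω n)ᶜ.Nonempty) (hw : ∀ n, w n ∈ Ω n)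
    (hopenl : IsOpen Ωl) (hconnl : IsConnected Ωl)
    (hscl : SimplyConnectedSpace Ωl)
    (hhypl : Ωlᶜ.Nonempty) (hwl : wl ∈ Ωl)
    (μ : ℕ → Measure ℂ) (ν : Measure ℂ)
    (hμ : ∀ n, IsHarmonicMeasure (Ω n) (w n) (μ n))
    (hν : IsHarmonicMeasure Ωl wl ν)
    (h : CommonInteriorApprox Ω w Ωl wl) :
    WeakConv μ ν := by
  have key := tendsto_integral_of_lipschitz Ω w Ωl wl hopen
    (fun n b hb => hasRoot_of_simplyConnected (hopen n) (hsc n) hb) hhyp hopenl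
    (fun b hb => hasRoot_of_simplyConnected hopenl hscl hb) hhypl hwl μ ν hμ hν h
  let μP : ℕ → ProbabilityMeasure ℂ := fun n => ⟨μ n, (hμ n).1⟩
  let νP : ProbabilityMeasure ℂ := ⟨ν, hν.1⟩
  have hconv : Tendsto μP atTop (𝓝 νP) := by
    rw [tendsto_iff_forall_lipschitz_integral_tendsto]
    rintro f ⟨C, hC⟩ ⟨L, hL⟩
    -- a bound on the oscillation of `f` bounds `f` itself
    refine key f (M := C + |f 0|) (fun z => ?_) hL
    have h1 := hC z 0
    rw [Real.dist_eq] at h1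
    linarith [abs_sub_abs_le_abs_sub (f z) (f 0)]
  exact ProbabilityMeasure.tendsto_iff_forall_integral_tendsto.1 hconv
end
end
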